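/- arXiv:0804.2166 — 2 statements merged into one kernel-verified Lean document; each statement's English description precedes it below -/
import Mathlib

section
/- For ℓ ≥ 3 a prime, any subgroup of Sp(2g, 𝔽_ℓ) containing at least ℓ^{2g-1} transvections is equal to Sp(2g, 𝔽_ℓ). -/
/-- A transvection in the symplectic group: an element `τ ≠ 1` such that `τ - 1` has
rank one as a matrix. -/
def IsSymplecticTransvection {g ℓ : ℕ} (τ : Matrix.symplecticGroup (Fin g) (ZMod ℓ)) : Prop :=
  τ ≠ 1 ∧ ((τ : Matrix (Fin g ⊕ Fin g) (Fin g ⊕ Fin g) (ZMod ℓ)) - 1).rank = 1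


set_option linter.unusedSectionVars false

section Abstract
variable {F V : Type*} [Field F] [Fintype F] [AddCommGroup V] [Module F V] [Module.Finite F V]
  [Fintype V]

theorem aux_two_le_finrank (ω : V →ₗ[F] V →ₗ[F] F) (halt : ∀ x, ω x x = 0)
    (W : Submodule F V) {a b : V} (ha : a ∈ W) (hb : b ∈ W) (hab : ω a b ≠ 0) :
    2 ≤ Module.finrank F W := by
  by_contra hlt
  have h1 : Module.finrank F W ≤ 1 := by omega
  obtain ⟨v, hv⟩ := finrank_le_one_iff.1 h1
  obtain ⟨p, hp⟩ := hv ⟨a, ha⟩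
  obtain ⟨q, hq⟩ := hv ⟨b, hb⟩
  have hp' : p • (v : V) = a := congrArg Subtype.val hp
  have hq' : q • (v : V) = b := congrArg Subtype.val hq
  apply hab
  rw [← hp', ← hq']
  simp [halt]

theorem aux_card_ker (ω : V →ₗ[F] V →ₗ[F] F) (v : V) (hv : ω v ≠ 0) :
    Nat.card (LinearMap.ker (ω v)) ≤ Nat.card F ^ (Module.finrank F V - 1) := by
  rw [Module.natCard_eq_pow_finrank (K := F)]
  apply Nat.pow_le_pow_right (Nat.card_pos)
  have : LinearMap.ker (ω v) < ⊤ := by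
    rw [lt_top_iff_ne_top]
    intro h
    exact hv (LinearMap.ker_eq_top.1 h)
  have := Submodule.finrank_lt_finrank_of_lt this
  rw [finrank_top] at this
  omega

theorem aux_main (h2 : (2 : F) ≠ 0) (hF3 : 3 ≤ Nat.card F)
    (ω : V →ₗ[F] V →ₗ[F] F) (halt : ∀ x, ω x x = 0)
    (hnd : ∀ v, v ≠ 0 → ω v ≠ 0) (C : Set V) (h0 : (0 : V) ∈ C)
    (hsm : ∀ (t : F) (v : V), v ∈ C → t • v ∈ C)
    (hcl : ∀ (t : F) (u v : V), u ∈ C → v ∈ C → u + (t * ω v u) • v ∈ C)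
    (hcard : Nat.card F ^ (Module.finrank F V - 1) < Nat.card C) : C = Set.univ := by
  have hanti : ∀ x y, ω x y = - ω y x := by
    intro x y
    have := halt (x + y)
    simp [halt] at this
    linear_combination this
  have hadd : ∀ u v, u ∈ C → v ∈ C → ω u v ≠ 0 → u + v ∈ C := by
    intro u v hu hv h
    have h' : ω v u ≠ 0 := by rw [hanti]; simpa using h
    have := hcl (ω v u)⁻¹ u v hu hv
    rwa [inv_mul_cancel₀ h', one_smul] at this
  have hnb : ∀ v, v ≠ 0 → ∃ d ∈ C, ω v d ≠ 0 := by
    intro v hv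
    by_contra! hcon
    have hsub : C ⊆ (LinearMap.ker (ω v) : Set V) := fun d hd => by
      simpa using hcon d hd
    have h1 := Nat.card_mono (Set.toFinite _) hsub
    have h2 := aux_card_ker ω v (hnd v hv)
    exact absurd (lt_of_lt_of_le hcard h1) (not_lt.2 h2)
  have key1 : ∀ a b c, a ∈ C → b ∈ C → c ∈ C → ω a b ≠ 0 → ω c b ≠ 0 → ω a c = 0 →
      ω a b + ω c b ≠ 0 → a + c ∈ C := by
    intro a b c ha hb hc hab hcb hac hs
    have hx : a + (-1 : F) • b ∈ C := hadd _ _ ha (hsm _ _ hb) (by simpa using hab)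
    have hy : c + b ∈ C := hadd _ _ hc hb hcb
    have := hadd _ _ hx hy (by
      simp [halt, hac]
      rw [hanti b c]
      intro h; apply hs; linear_combination h)
    convert this using 1
    simp only [neg_smul, one_smul]
    abel
  -- asymmetric second case
  have key2 : ∀ a b c d, a ∈ C → b ∈ C → c ∈ C → d ∈ C → ω a b ≠ 0 → ω a c = 0 →
      ω a b + ω c b = 0 → ω a d ≠ 0 → ω c d = 0 → a + c ∈ C := by
    intro a b c d ha hb hc hd hab hac hs had hcd
    set t : F := ω a b / ω a d with ht
    have htd : t * ω a d = ω a b := by rw [ht]; field_simp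
    have ht0 : t ≠ 0 := div_ne_zero hab had
    have hb' : b + t • d ∈ C := by
      by_cases hbd : ω b d = 0
      · refine key1 b a (t • d) hb ha (hsm _ _ hd) ?_ ?_ ?_ ?_
        · rw [hanti]; simpa using hab
        · rw [hanti]; simp [ht0, had]
        · simp [hbd]
        · rw [hanti b a, hanti _ a]
          simp only [map_smul, smul_eq_mul, htd]
          intro h
          apply mul_ne_zero h2 hab
          linear_combination -h
      · exact hadd _ _ hb (hsm _ _ hd) (by simp [hbd, ht0])
    have e1 : ω a (b + t • d) = 2 * ω a b := by simp [htd]; ring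
    have e2 : ω c (b + t • d) = - ω a b := by simp [hcd]; linear_combination hs
    refine key1 a (b + t • d) c ha hb' hc ?_ ?_ hac ?_
    · rw [e1]; exact mul_ne_zero h2 hab
    · rw [e2]; simpa using hab
    · rw [e1, e2]; intro h; apply hab; linear_combination h
  have key3 : ∀ a b c, a ∈ C → b ∈ C → c ∈ C → ω a b ≠ 0 → ω c b ≠ 0 → a + c ∈ C := by
    intro a b c ha hb hc hab hcb
    by_cases hac : ω a c = 0
    swap
    · exact hadd _ _ ha hc hac
    by_cases hs : ω a b + ω c b = 0
    swap
    · exact key1 a b c ha hb hc hab hcb hac hs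
    by_cases hr : a + c = 0
    · rw [hr]; exact h0
    obtain ⟨d, hd, hrd⟩ := hnb _ hr
    rw [map_add, LinearMap.add_apply] at hrd
    by_cases had : ω a d = 0
    · rw [add_comm]
      refine key2 c b a d hc hb ha hd hcb ?_ ?_ ?_ had
      · rw [hanti, hac, neg_zero]
      · rw [add_comm]; exact hs
      · intro h; apply hrd; rw [had, h, add_zero]
    · by_cases hcd : ω c d = 0
      · exact key2 a b c d ha hb hc hd hab hac hs had hcd
      · exact key1 a d c ha hd hc had hcd hac hrd
  have conn : ∀ a c, a ∈ C → c ∈ C → a ≠ 0 → c ≠ 0 → ∃ b ∈ C, ω a b ≠ 0 ∧ ω c b ≠ 0 := by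
    intro a c0 ha hc0 ha0 hc00
    by_contra hcon
    set A : Set V := {c | c ∈ C ∧ ∃ b ∈ C, ω a b ≠ 0 ∧ ω c b ≠ 0} with hA
    set B : Set V := {c | c ∈ C ∧ c ≠ 0 ∧ ¬ ∃ b ∈ C, ω a b ≠ 0 ∧ ω c b ≠ 0} with hB
    have stepA : ∀ c d, c ∈ A → d ∈ C → ω c d ≠ 0 → d ∈ A := by
      rintro c d ⟨hc, b, hb, hab, hcb⟩ hd hcd
      refine ⟨hd, ?_⟩
      have hdc : ω d c ≠ 0 := by rw [hanti]; simpa using hcd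
      by_cases hdb : ω d b = 0
      swap
      · exact ⟨b, hb, hab, hdb⟩
      by_cases hac : ω a c = 0
      swap
      · exact ⟨c, hc, hac, hdc⟩
      refine ⟨c + b, hadd _ _ hc hb hcb, ?_, ?_⟩
      · simpa [hac] using hab
      · simpa [hdb] using hdc
    have orth : ∀ c ∈ A, ∀ d ∈ B, ω c d = 0 := by
      intro c hc d hd
      by_contra h
      exact hd.2.2 (stepA c d hc hd.1 h).2
    have haA : a ∈ A := by
      obtain ⟨b, hb, hab⟩ := hnb a ha0
      exact ⟨ha, b, hb, hab, hab⟩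
    have hcB : c0 ∈ B := ⟨hc0, hc00, hcon⟩
    obtain ⟨b, hb, hab⟩ := hnb a ha0
    have hbA := stepA a b haA hb hab
    obtain ⟨e, he, hce⟩ := hnb c0 hc00
    have heB : e ∈ B := by
      refine ⟨he, ?_, fun h => ?_⟩
      · rintro rfl; simp at hce
      · exact hcon (stepA e c0 ⟨he, h⟩ hc0 (by rw [hanti]; simpa using hce)).2
    have hk := aux_two_le_finrank ω halt (Submodule.span F A) (Submodule.subset_span haA)
      (Submodule.subset_span hbA) hab
    have hm := aux_two_le_finrank ω halt (Submodule.span F B) (Submodule.subset_span hcB)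
      (Submodule.subset_span heB) hce
    have orth1 : ∀ c ∈ Submodule.span F A, ∀ d ∈ B, ω c d = 0 := by
      intro c hc d hd
      have : Submodule.span F A ≤ LinearMap.ker (ω.flip d) :=
        Submodule.span_le.2 fun x hx => by simpa using orth x hx d hd
      simpa using this hc
    have orth2 : ∀ c ∈ Submodule.span F B, ∀ d ∈ A, ω c d = 0 := by
      intro c hc d hd
      have : Submodule.span F B ≤ LinearMap.ker (ω.flip d) :=
        Submodule.span_le.2 fun x hx => by
          simp only [SetLike.mem_coe, LinearMap.mem_ker, LinearMap.flip_apply]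
          rw [hanti, orth d hd x hx, neg_zero]
      simpa using this hc
    have hdisj : Disjoint (Submodule.span F A) (Submodule.span F B) := by
      rw [Submodule.disjoint_def]
      intro x hx hy
      by_contra hx0
      obtain ⟨d, hd, hxd⟩ := hnb x hx0
      by_cases hdA : d ∈ A
      · exact hxd (orth2 x hy d hdA)
      · by_cases hd0 : d = 0
        · rw [hd0] at hxd; simp at hxd
        · exact hxd (orth1 x hx d ⟨hd, hd0, fun h => hdA ⟨hd, h⟩⟩)
    have hsum := Submodule.finrank_add_finrank_le_of_disjoint hdisj
    have hCsub : C ⊆ (Submodule.span F A : Set V) ∪ (Submodule.span F B : Set V) := by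
      intro d hd
      by_cases hdA : d ∈ A
      · exact Or.inl (Submodule.subset_span hdA)
      · by_cases hd0 : d = 0
        · rw [hd0]; exact Or.inl (Submodule.zero_mem _)
        · exact Or.inr (Submodule.subset_span ⟨hd, hd0, fun h => hdA ⟨hd, h⟩⟩)
    have h1 := Nat.card_mono (Set.toFinite _) hCsub
    have h3 := Set.ncard_union_le (Submodule.span F A : Set V) (Submodule.span F B : Set V)
    have h4 : (Submodule.span F A : Set V).ncard = Nat.card F ^ Module.finrank F (Submodule.span F A) :=
      Module.natCard_eq_pow_finrank (K := F)
    have h5 : (Submodule.span F B : Set V).ncard = Nat.card F ^ Module.finrank F (Submodule.span F B) :=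
      Module.natCard_eq_pow_finrank (K := F)
    have hpos : 0 < Nat.card F := by omega
    have h6 : Nat.card F ^ Module.finrank F (Submodule.span F A) ≤
      Nat.card F ^ (Module.finrank F V - 2) := Nat.pow_le_pow_right hpos (by omega)
    have h7 : Nat.card F ^ Module.finrank F (Submodule.span F B) ≤
      Nat.card F ^ (Module.finrank F V - 2) := Nat.pow_le_pow_right hpos (by omega)
    have h8 : Nat.card F ^ (Module.finrank F V - 1) =
        Nat.card F ^ (Module.finrank F V - 2) * Nat.card F := by
      rw [← pow_succ]; congr 1; omega
    have h9 : Nat.card F ^ (Module.finrank F V - 2) * 3 ≤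
      Nat.card F ^ (Module.finrank F V - 2) * Nat.card F := Nat.mul_le_mul_left _ hF3
    have h10 : Nat.card C ≤ _ := h1.trans h3
    omega
  let W : Submodule F V :=
    { carrier := C
      zero_mem' := h0
      smul_mem' := fun t v hv => hsm t v hv
      add_mem' := by
        intro a c ha hc
        by_cases ha0 : a = 0
        · rw [ha0, zero_add]; exact hc
        by_cases hc0 : c = 0
        · rw [hc0, add_zero]; exact ha
        obtain ⟨b, hb, hab, hcb⟩ := conn a c ha hc ha0 hc0
        exact key3 a b c ha hb hc hab hcb }
  have hW : W = ⊤ := by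
    by_contra hne
    have hlt := Submodule.finrank_lt_finrank_of_lt (lt_top_iff_ne_top.2 hne)
    rw [finrank_top] at hlt
    have h1 : Nat.card C = Nat.card F ^ Module.finrank F W :=
      Module.natCard_eq_pow_finrank (K := F) (V := W)
    have : Nat.card F ^ Module.finrank F W ≤ Nat.card F ^ (Module.finrank F V - 1) :=
      Nat.pow_le_pow_right (by omega) (by omega)
    omega
  have : (W : Set V) = Set.univ := by rw [hW]; rfl
  exact this
end Abstract

section Concrete
open Matrix

/-- The standard symplectic form. -/
noncomputable def sform (l K : Type*) [DecidableEq l] [Fintype l] [Field K] :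
    (l ⊕ l → K) →ₗ[K] (l ⊕ l → K) →ₗ[K] K := Matrix.toLinearMap₂' K (J l K)

variable {l K : Type*} [DecidableEq l] [Fintype l] [Field K]

theorem sform_apply (x y : l ⊕ l → K) : sform l K x y = x ⬝ᵥ J l K *ᵥ y :=
  Matrix.toLinearMap₂'_apply' _ _ _

theorem sform_eq (x y : l ⊕ l → K) :
    sform l K x y = ∑ i, (x (Sum.inr i) * y (Sum.inl i) - x (Sum.inl i) * y (Sum.inr i)) := by
  rw [sform_apply]
  simp [J, Matrix.fromBlocks_mulVec, dotProduct, Fintype.sum_sum_type, Finset.sum_sub_distrib,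
    Matrix.neg_mulVec]
  ring

theorem sform_self (x : l ⊕ l → K) : sform l K x x = 0 := by
  rw [sform_eq]
  exact Finset.sum_eq_zero fun i _ => by ring

theorem sform_anti (x y : l ⊕ l → K) : sform l K x y = - sform l K y x := by
  rw [sform_eq, sform_eq, ← Finset.sum_neg_distrib]
  exact Finset.sum_congr rfl fun i _ => by ring

theorem sform_inl (x : l ⊕ l → K) (i : l) :
    sform l K x (Pi.single (Sum.inl i) 1) = x (Sum.inr i) := by
  rw [sform_eq]
  simp [Pi.single_apply]

theorem sform_inr (x : l ⊕ l → K) (i : l) :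
    sform l K x (Pi.single (Sum.inr i) 1) = - x (Sum.inl i) := by
  rw [sform_eq]
  simp [Pi.single_apply]

theorem sform_nd (x : l ⊕ l → K) (h : x ≠ 0) : sform l K x ≠ 0 := by
  intro h0
  apply h
  funext i
  rcases i with i | i
  · have := sform_inr x i
    rw [h0] at this
    simpa using this.symm
  · have := sform_inl x i
    rw [h0] at this
    simpa using this.symm

theorem mem_sp_iff (A : Matrix (l ⊕ l) (l ⊕ l) K) :
    A ∈ symplecticGroup l K ↔ ∀ x y, sform l K (A *ᵥ x) (A *ᵥ y) = sform l K x y := by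
  have key : ∀ x y, sform l K (A *ᵥ x) (A *ᵥ y) = Matrix.toLinearMap₂' K (Aᵀ * J l K * A) x y := by
    intro x y
    rw [sform_apply, Matrix.toLinearMap₂'_apply', Matrix.mulVec_mulVec, Matrix.dotProduct_mulVec,
      ← Matrix.vecMul_transpose, Matrix.vecMul_vecMul, ← Matrix.dotProduct_mulVec, Matrix.mul_assoc]
  rw [SymplecticGroup.mem_iff']
  constructor
  · intro h x y
    rw [key, h]; rfl
  · intro h
    apply (Matrix.toLinearMap₂' K : Matrix (l ⊕ l) (l ⊕ l) K ≃ₗ[K]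
      ((l ⊕ l → K) →ₗ[K] (l ⊕ l → K) →ₗ[K] K)).injective
    apply LinearMap.ext; intro x
    apply LinearMap.ext; intro y
    rw [← key, h]; rfl

theorem sp_form (τ : symplecticGroup l K) (x y : l ⊕ l → K) :
    sform l K (τ.1 *ᵥ x) (τ.1 *ᵥ y) = sform l K x y := (mem_sp_iff _).1 τ.2 x y

theorem sp_ext {σ τ : symplecticGroup l K} (h : ∀ x, σ.1 *ᵥ x = τ.1 *ᵥ x) : σ = τ := by
  apply Subtype.ext
  apply Matrix.mulVec_injective
  funext x
  exact h x

/-- matrix of the transvection `x ↦ x + c ω(v,x) v`. -/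
noncomputable def tvMat (v : l ⊕ l → K) (c : K) : Matrix (l ⊕ l) (l ⊕ l) K :=
  1 + c • Matrix.vecMulVec v (v ᵥ* J l K)

theorem tvMat_mulVec (v : l ⊕ l → K) (c : K) (x : l ⊕ l → K) :
    tvMat v c *ᵥ x = x + (c * sform l K v x) • v := by
  rw [tvMat, Matrix.add_mulVec, Matrix.one_mulVec, Matrix.smul_mulVec, Matrix.vecMulVec_mulVec,
    sform_apply, Matrix.dotProduct_mulVec]
  funext i
  simp
  ring

/-- The symplectic transvection. -/
noncomputable def tv (v : l ⊕ l → K) (c : K) : symplecticGroup l K :=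
  ⟨tvMat v c, (mem_sp_iff _).2 fun x y => by
    rw [tvMat_mulVec, tvMat_mulVec]
    simp [sform_self]
    rw [sform_anti x v]
    ring⟩

theorem tv_mulVec (v : l ⊕ l → K) (c : K) (x : l ⊕ l → K) :
    (tv v c).1 *ᵥ x = x + (c * sform l K v x) • v := tvMat_mulVec v c x

theorem sp_mul_mulVec (σ τ : symplecticGroup l K) (x : l ⊕ l → K) :
    (σ * τ).1 *ᵥ x = σ.1 *ᵥ (τ.1 *ᵥ x) := by
  rw [Matrix.mulVec_mulVec]; rfl

theorem sp_one_mulVec (x : l ⊕ l → K) : (1 : symplecticGroup l K).1 *ᵥ x = x :=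
  Matrix.one_mulVec x

theorem tv_mul (v : l ⊕ l → K) (c d : K) : tv v c * tv v d = tv v (c + d) := by
  apply sp_ext; intro x
  rw [sp_mul_mulVec]
  simp only [tv_mulVec, map_add, map_smul, sform_self]
  module

theorem tv_zero (v : l ⊕ l → K) : tv v 0 = 1 := by
  apply sp_ext; intro x
  rw [tv_mulVec, sp_one_mulVec]; simp

theorem tv_vzero (c : K) : tv (0 : l ⊕ l → K) c = 1 := by
  apply sp_ext; intro x
  rw [tv_mulVec, sp_one_mulVec]; simp

theorem tv_pow (v : l ⊕ l → K) (c : K) (n : ℕ) : tv v c ^ n = tv v (n * c) := by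
  induction n with
  | zero => simp [tv_zero]
  | succ n ih => rw [pow_succ, ih, tv_mul]; congr 1; push_cast; ring

theorem tv_smul (v : l ⊕ l → K) (a c : K) : tv (a • v) c = tv v (a * a * c) := by
  apply sp_ext; intro x
  simp only [tv_mulVec, map_smul, LinearMap.smul_apply, smul_eq_mul]
  module

theorem tv_conj (σ : symplecticGroup l K) (v : l ⊕ l → K) (c : K) :
    σ * tv v c * σ⁻¹ = tv (σ.1 *ᵥ v) c := by
  rw [mul_inv_eq_iff_eq_mul]
  apply sp_ext; intro x
  rw [sp_mul_mulVec, sp_mul_mulVec, tv_mulVec, tv_mulVec, sp_form, Matrix.mulVec_add,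
    Matrix.mulVec_smul]

theorem exists_tv (τ : symplecticGroup l K) (h : (τ.1 - 1).rank = 1) :
    ∃ (v : l ⊕ l → K) (c : K), v ≠ 0 ∧ τ = tv v c := by
  rw [Matrix.rank] at h
  obtain ⟨u, hu0, hu⟩ := finrank_eq_one_iff'.1 h
  have hk : ∀ x, ∃ k : K, τ.1 *ᵥ x = x + k • (u : l ⊕ l → K) := by
    intro x
    obtain ⟨k, hk⟩ := hu ⟨(τ.1 - 1).mulVecLin x, LinearMap.mem_range_self _ _⟩
    have hk' : k • (u : l ⊕ l → K) = (τ.1 - 1) *ᵥ x := congrArg Subtype.val hk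
    refine ⟨k, ?_⟩
    rw [hk', Matrix.sub_mulVec, Matrix.one_mulVec]
    abel
  choose k hk using hk
  have hu0' : (u : l ⊕ l → K) ≠ 0 := fun h => hu0 (Subtype.ext h)
  have hrel : ∀ x y, k x * sform l K u y = k y * sform l K u x := by
    intro x y
    have := sp_form τ x y
    rw [hk, hk] at this
    simp [sform_self] at this
    rw [sform_anti x u] at this
    linear_combination this
  obtain ⟨y, hy⟩ : ∃ y, sform l K u y ≠ 0 := by
    by_contra! hcon
    exact sform_nd _ hu0' (LinearMap.ext hcon)
  refine ⟨u, k y / sform l K u y, hu0', ?_⟩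
  apply sp_ext; intro x
  rw [hk, tv_mulVec]
  congr 2
  have := hrel x y
  field_simp
  linear_combination this

/-- Move `v` to `w` by transvections in `H` fixing everything orthogonal to `U`. -/
theorem move_one (H : Subgroup (symplecticGroup l K)) (hH : ∀ v c, tv v c ∈ H)
    (v w : l ⊕ l → K) (hvw : sform l K v w ≠ 0) :
    ∃ t ∈ H, t.1 *ᵥ v = w ∧ ∀ x, sform l K (w - v) x = 0 → t.1 *ᵥ x = x := by
  have h : sform l K (w - v) v ≠ 0 := by
    simp [sform_self]; rw [sform_anti]; simpa using hvw
  refine ⟨tv (w - v) (sform l K (w - v) v)⁻¹, hH _ _, ?_, ?_⟩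
  · rw [tv_mulVec, inv_mul_cancel₀ h]; module
  · intro x hx
    rw [tv_mulVec, hx]; simp

theorem move_pair (H : Subgroup (symplecticGroup l K)) (hH : ∀ v c, tv v c ∈ H)
    (e f e' f' : l ⊕ l → K) (h1 : sform l K e f = 1) (h2 : sform l K e' f' = 1) :
    ∃ t ∈ H, t.1 *ᵥ e = e' ∧ t.1 *ᵥ f = f' ∧ ∀ x, sform l K e x = 0 → sform l K f x = 0 →
      sform l K e' x = 0 → sform l K f' x = 0 → t.1 *ᵥ x = x := by
  -- first move `e`
  obtain ⟨t, ht, hte, htx⟩ : ∃ t ∈ H, t.1 *ᵥ e = e' ∧ ∀ x, sform l K e x = 0 →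
      sform l K f x = 0 → sform l K e' x = 0 → sform l K f' x = 0 → t.1 *ᵥ x = x := by
    by_cases hee : sform l K e e' = 0
    swap
    · obtain ⟨t, ht, h3, h4⟩ := move_one H hH e e' hee
      exact ⟨t, ht, h3, fun x hx _ hx' _ => h4 x (by simp [hx, hx'])⟩
    obtain ⟨z, hz1, hz2, hz⟩ : ∃ z, sform l K e z ≠ 0 ∧ sform l K z e' ≠ 0 ∧
        ∀ x, sform l K f x = 0 → sform l K f' x = 0 → sform l K z x = 0 := by
      by_cases ha : sform l K e f' = 0
      swap
      · exact ⟨f', ha, by rw [sform_anti, h2]; simp, fun x _ h => h⟩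
      by_cases hb : sform l K f e' = 0
      swap
      · exact ⟨f, by rw [h1]; simp, hb, fun x h _ => h⟩
      refine ⟨f + f', by simp [h1, ha], ?_, fun x h h' => by simp [h, h']⟩
      rw [sform_anti]
      simp [h2]
      rw [sform_anti, hb]; simp
    obtain ⟨t, ht, h3, h4⟩ := move_one H hH e z hz1
    obtain ⟨s, hs, h5, h6⟩ := move_one H hH z e' hz2
    refine ⟨s * t, H.mul_mem hs ht, by rw [sp_mul_mulVec, h3, h5], ?_⟩
    intro x hx1 hx2 hx3 hx4
    have := hz x hx2 hx4
    rw [sp_mul_mulVec, h4 x (by simp [hx1, this]), h6 x (by simp [hx3, this])]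
  -- now move the image of `f`
  set f1 := t.1 *ᵥ f with hf1
  have h1' : sform l K e' f1 = 1 := by rw [← hte, hf1, sp_form, h1]
  have hf1x : ∀ x, sform l K e x = 0 → sform l K f x = 0 → sform l K e' x = 0 →
      sform l K f' x = 0 → sform l K f1 x = 0 := by
    intro x a b c d
    have := sp_form t f x
    rwa [htx x a b c d, b] at this
  obtain ⟨s, hs, hse, hsf, hsx⟩ : ∃ s ∈ H, s.1 *ᵥ e' = e' ∧ s.1 *ᵥ f1 = f' ∧
      ∀ x, sform l K f1 x = 0 → sform l K e' x = 0 → sform l K f' x = 0 → s.1 *ᵥ x = x := by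
    by_cases hff : sform l K f1 f' = 0
    swap
    · obtain ⟨s, hs, h3, h4⟩ := move_one H hH f1 f' hff
      refine ⟨s, hs, h4 _ ?_, h3, fun x hx _ hx' => h4 x (by simp [hx, hx'])⟩
      rw [sform_anti]; simp [h1', h2]
    have hz1 : sform l K f1 (e' + f1) ≠ 0 := by
      simp [sform_self]; rw [sform_anti, h1']; simp
    have hz2 : sform l K (e' + f1) f' ≠ 0 := by
      simp [hff, h2]
    obtain ⟨s, hs, h3, h4⟩ := move_one H hH _ _ hz1
    obtain ⟨r, hr, h5, h6⟩ := move_one H hH _ _ hz2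
    refine ⟨r * s, H.mul_mem hr hs, ?_, by rw [sp_mul_mulVec, h3, h5], ?_⟩
    · rw [sp_mul_mulVec, h4, h6]
      · rw [sform_anti]; simp [h1', h2, sform_self]
      · simp [sform_self]
    · intro x a b c
      rw [sp_mul_mulVec, h4, h6]
      · simp [a, b, c]
      · simp [b]
  refine ⟨s * t, H.mul_mem hs ht, by rw [sp_mul_mulVec, hte, hse],
    by rw [sp_mul_mulVec, ← hf1, hsf], ?_⟩
  intro x a b c d
  rw [sp_mul_mulVec, htx x a b c d, hsx x (hf1x x a b c d) c d]

theorem eq_top_of_all_tv (H : Subgroup (symplecticGroup l K)) (hH : ∀ v c, tv v c ∈ H) :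
    H = ⊤ := by
  rw [eq_top_iff]
  intro s _
  let E : l → (l ⊕ l → K) := fun i => Pi.single (Sum.inr i) 1
  let D : l → (l ⊕ l → K) := fun i => Pi.single (Sum.inl i) 1
  have hED : ∀ i, sform l K (E i) (D i) = 1 := fun i => by
    simp only [D, sform_inl]; simp [E]
  have hED' : ∀ i j, i ≠ j → sform l K (E i) (D j) = 0 := fun i j h => by
    simp only [D, sform_inl]; simp [E, h.symm]
  have hEE : ∀ i j, sform l K (E i) (E j) = 0 := fun i j => by
    simp only [E, sform_inr]; simp
  have hDD : ∀ i j, sform l K (D i) (D j) = 0 := fun i j => by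
    simp only [D, sform_inl]; simp
  have hDE' : ∀ i j, i ≠ j → sform l K (D i) (E j) = 0 := fun i j h => by
    rw [sform_anti, hED' j i h.symm, neg_zero]
  have claim : ∀ S : Finset l, ∃ t ∈ H, ∀ i ∈ S,
      (t * s).1 *ᵥ E i = E i ∧ (t * s).1 *ᵥ D i = D i := by
    intro S
    induction S using Finset.induction_on with
    | empty => exact ⟨1, H.one_mem, by simp⟩
    | insert k S hk ih =>
      obtain ⟨t, ht, hfix⟩ := ih
      set p := t * s with hp
      obtain ⟨r, hr, hre, hrf, hrx⟩ := move_pair H hH (p.1 *ᵥ E k) (p.1 *ᵥ D k) (E k) (D k)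
        (by rw [sp_form, hED]) (hED k)
      refine ⟨r * t, H.mul_mem hr ht, ?_⟩
      intro i hi
      rw [mul_assoc, ← hp]
      simp only [sp_mul_mulVec r p]
      rcases Finset.mem_insert.1 hi with rfl | hi
      · exact ⟨hre, hrf⟩
      · have hki : k ≠ i := by rintro rfl; exact hk hi
        obtain ⟨h1, h2⟩ := hfix i hi
        constructor
        · rw [h1]
          apply hrx
          · rw [← h1, sp_form, hEE]
          · rw [← h1, sp_form, hDE' _ _ hki]
          · exact hEE _ _
          · exact hDE' _ _ hki
        · rw [h2]
          apply hrx
          · rw [← h2, sp_form, hED' _ _ hki]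
          · rw [← h2, sp_form, hDD]
          · exact hED' _ _ hki
          · exact hDD _ _
  obtain ⟨t, ht, hfix⟩ := claim Finset.univ
  have hone : t * s = 1 := by
    apply Subtype.ext
    apply Matrix.ext_of_mulVec_single
    intro i
    rw [sp_one_mulVec]
    rcases i with i | i
    · exact (hfix i (Finset.mem_univ _)).2
    · exact (hfix i (Finset.mem_univ _)).1
  rw [eq_inv_of_mul_eq_one_right hone]
  exact H.inv_mem ht

end Concrete

/-- For `ℓ ≥ 3` a prime, any subgroup of `Sp(2g, 𝔽_ℓ)` containing at least `ℓ^(2g-1)`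
transvections is the whole of `Sp(2g, 𝔽_ℓ)`. -/
theorem subgroup_eq_top_of_many_transvections (g ℓ : ℕ) (hℓ : ℓ.Prime) (hℓ3 : 3 ≤ ℓ)
    (H : Subgroup (Matrix.symplecticGroup (Fin g) (ZMod ℓ)))
    (h : ℓ ^ (2 * g - 1) ≤
      Nat.card {τ : Matrix.symplecticGroup (Fin g) (ZMod ℓ) //
        τ ∈ H ∧ IsSymplecticTransvection τ}) :
    H = ⊤ := by
  have : Fact ℓ.Prime := ⟨hℓ⟩
  have hroot : ∀ (v : Fin g ⊕ Fin g → ZMod ℓ) (c : ZMod ℓ), c ≠ 0 → tv v c ∈ H →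
      ∀ d, tv v d ∈ H := by
    intro v c hc hcH d
    have := H.pow_mem hcH (d / c).val
    rw [tv_pow, ZMod.natCast_zmod_val, div_mul_cancel₀ _ hc] at this
    exact this
  let C : Set (Fin g ⊕ Fin g → ZMod ℓ) := {v | ∀ c, tv v c ∈ H}
  have hsm : ∀ (t : ZMod ℓ) v, v ∈ C → t • v ∈ C := by
    intro t v hv c
    rw [tv_smul]; exact hv _
  have h0 : (0 : Fin g ⊕ Fin g → ZMod ℓ) ∈ C := by
    intro c; rw [tv_vzero]; exact H.one_mem
  have hcl : ∀ (t : ZMod ℓ) u v, u ∈ C → v ∈ C →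
      u + (t * sform (Fin g) (ZMod ℓ) v u) • v ∈ C := by
    intro t u v hu hv c
    rw [← tv_mulVec, ← tv_conj]
    exact H.mul_mem (H.mul_mem (hv t) (hu c)) (H.inv_mem (hv t))
  -- a choice of a vector in each set
  obtain ⟨pick, hpick⟩ : ∃ pick : Set (Fin g ⊕ Fin g → ZMod ℓ) → (Fin g ⊕ Fin g → ZMod ℓ),
      ∀ S, S.Nonempty → pick S ∈ S := by
    classical
    exact ⟨fun S => if hS : S.Nonempty then hS.choose else 0, fun S hS => by
      simp only [hS, dif_pos]; exact hS.choose_spec⟩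
  let φ : (Fin g ⊕ Fin g → ZMod ℓ) → ZMod ℓ := fun y =>
    (sform (Fin g) (ZMod ℓ) y (pick {x | sform (Fin g) (ZMod ℓ) y x ≠ 0}))⁻¹
  have hφ0 : ∀ y, y ≠ 0 → φ y ≠ 0 := by
    intro y hy
    apply inv_ne_zero
    apply hpick {x | sform (Fin g) (ZMod ℓ) y x ≠ 0}
    by_contra hcon
    rw [Set.not_nonempty_iff_eq_empty] at hcon
    apply sform_nd y hy
    apply LinearMap.ext
    intro x
    by_contra hx
    have : x ∈ ({x | sform (Fin g) (ZMod ℓ) y x ≠ 0} : Set _) := hx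
    rw [hcon] at this
    exact this
  have hφ : ∀ y a, a ≠ 0 → φ (a • y) = a⁻¹ * φ y := by
    intro y a ha
    have : {x | sform (Fin g) (ZMod ℓ) (a • y) x ≠ 0} = {x | sform (Fin g) (ZMod ℓ) y x ≠ 0} := by
      ext x; simp [ha]
    simp only [φ, this]
    simp [mul_comm]
  have hsub : {τ | τ ∈ H ∧ IsSymplecticTransvection τ} ⊆
      (fun y => tv y (φ y)) '' (C \ {0}) := by
    rintro τ ⟨hτ, hτ1, hrk⟩
    obtain ⟨v, c, hv, rfl⟩ := exists_tv τ hrk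
    have hc : c ≠ 0 := by
      rintro rfl; exact hτ1 (tv_zero v)
    have ha : c / φ v ≠ 0 := div_ne_zero hc (hφ0 v hv)
    refine ⟨(c / φ v) • v, ⟨hsm _ _ (hroot v c hc hτ), ?_⟩, ?_⟩
    · simpa using ⟨⟨hc, hφ0 v hv⟩, hv⟩
    · simp only
      rw [hφ v _ ha, tv_smul]
      congr 1
      have := hφ0 v hv
      field_simp
  have hle : ℓ ^ (2 * g - 1) ≤ (C \ {0}).ncard := by
    refine h.trans ?_
    have h1 := Nat.card_mono (Set.toFinite _) hsub
    exact h1.trans (Set.ncard_image_le (Set.toFinite _))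
  have hlt : ℓ ^ (2 * g - 1) < Nat.card C := by
    have h2 := Set.ncard_sdiff_singleton_add_one h0 (Set.toFinite C)
    have h3 : Nat.card C = C.ncard := rfl
    omega
  have hCU : C = Set.univ := by
    apply aux_main (F := ZMod ℓ) ?_ (by simpa using hℓ3) (sform (Fin g) (ZMod ℓ)) sform_self
      sform_nd C h0 hsm hcl
    · have : g + g = 2 * g := by ring
      simpa [this] using hlt
    · intro h2
      have h2' : ((2 : ℕ) : ZMod ℓ) = 0 := by exact_mod_cast h2
      rw [ZMod.natCast_eq_zero_iff] at h2'
      exact absurd (Nat.le_of_dvd (by norm_num) h2') (by omega)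
  apply eq_top_of_all_tv
  intro v c
  have : v ∈ C := by rw [hCU]; trivial
  exact this c
end

section
/- For a fixed number field k, define β_k(x; δ) = min{t ≥ 2 : Σ_{N𝔭 ≤ t} (N𝔭)^{−1+δ} ≥ x}. Then for 0 < δ < 1 and x ≥ 2, β_k(x; δ) ≪ (2x log x)^{1/δ}, where the implied constant depends only on k. -/
open NumberField IsDedekindDomain

noncomputable section

/-- `β_k(x; δ) = min{t ≥ 2 : Σ_{N𝔭 ≤ t} (N𝔭)^{−1+δ} ≥ x}`, the sum running over the
prime ideals `𝔭` of `ℤ_k` of norm at most `t`. -/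
def betaPIT (k : Type*) [Field k] [NumberField k] (x δ : ℝ) : ℝ :=
  sInf {t : ℝ | 2 ≤ t ∧
    x ≤ ∑ᶠ v : HeightOneSpectrum (𝓞 k),
      if (Nat.card (𝓞 k ⧸ v.asIdeal) : ℝ) ≤ t
        then (Nat.card (𝓞 k ⧸ v.asIdeal) : ℝ) ^ (-1 + δ) else 0}


lemma bp_exists_small {k : Type*} [Field k] [NumberField k] {ι : Type*} [Fintype ι]
    (b : Module.Basis ι ℤ (𝓞 k)) (I : Ideal (𝓞 k)) (hI : I ≠ ⊥) (m : ℕ)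
    (hm : Ideal.absNorm I < (m + 1) ^ Fintype.card ι) :
    ∃ α ∈ I, α ≠ 0 ∧ ∀ i, |b.repr α i| ≤ m := by
  classical
  have : Finite (𝓞 k ⧸ I) := Ideal.finiteQuotientOfFreeOfNeBot I hI
  have : Fintype (𝓞 k ⧸ I) := Fintype.ofFinite _
  have hcard : Fintype.card (𝓞 k ⧸ I) < Fintype.card (ι → Fin (m + 1)) := by
    rw [Fintype.card_fun, Fintype.card_fin, ← Nat.card_eq_fintype_card]
    exact hm
  obtain ⟨x, y, hxy, hf⟩ := Fintype.exists_ne_map_eq_of_card_lt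
    (fun a : ι → Fin (m + 1) => Ideal.Quotient.mk I (∑ i, ((a i : ℕ) : ℤ) • b i)) hcard
  rw [Ideal.Quotient.eq] at hf
  have hrepr : ∀ i, b.repr (∑ i, ((x i : ℕ) : ℤ) • b i - ∑ i, ((y i : ℕ) : ℤ) • b i) i
      = ((x i : ℕ) : ℤ) - ((y i : ℕ) : ℤ) := by
    intro i
    rw [map_sub, Finsupp.sub_apply, b.repr_sum_self, b.repr_sum_self]
  refine ⟨_, hf, ?_, ?_⟩
  · intro h0
    apply hxy
    funext i
    have := hrepr i
    rw [h0] at this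
    simp at this
    apply Fin.ext
    omega
  · intro i
    rw [hrepr i, abs_le]
    have := (x i).2
    have := (y i).2
    constructor <;> omega

lemma bp_small_rep {k : Type*} [Field k] [NumberField k] {ι : Type*} [Fintype ι]
    (b : Module.Basis ι ℤ (𝓞 k)) :
    ∃ D : ℕ, 0 < D ∧ ∀ (α : 𝓞 k) (m : ℕ), α ≠ 0 → (∀ i, |b.repr α i| ≤ m) →
      ∀ β : 𝓞 k, ∃ γ : 𝓞 k, ∀ i, |b.repr (β - α * γ) i| ≤ D * m := by
  classical
  refine ⟨1 + ∑ i, ∑ j, ∑ l, (b.repr (b l * b j) i).natAbs, by omega, ?_⟩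
  intro α m hα hm β
  set D' := ∑ i, ∑ j, ∑ l, (b.repr (b l * b j) i).natAbs with hD'
  obtain ⟨α', hα'⟩ := Ideal.mem_span_singleton'.mp (Ideal.absNorm_mem (Ideal.span {α}))
  set n : ℤ := (Ideal.absNorm (Ideal.span {α}) : ℤ) with hn
  have hn0 : 0 < n := by
    have : Ideal.absNorm (Ideal.span {α}) ≠ 0 := by
      rw [Ne, Ideal.absNorm_eq_zero_iff, Ideal.span_singleton_eq_bot]; exact hα
    omega
  have hα'' : α * α' = (n : 𝓞 k) := by rw [mul_comm, hα', hn]; simp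
  set c := b.repr (β * α') with hc
  refine ⟨∑ i, (c i / n) • b i, fun i => ?_⟩
  have key : n • (β - α * ∑ i, (c i / n) • b i) = ∑ j, (c j % n) • (α * b j) := by
    have h1 : β * α' = ∑ j, c j • b j := (b.sum_repr _).symm
    have h2 : n • β = α * ∑ j, c j • b j := by
      rw [← h1, zsmul_eq_mul, ← hα'']; ring
    rw [smul_sub, h2, Finset.mul_sum, Finset.mul_sum, Finset.smul_sum, ← Finset.sum_sub_distrib]
    refine Finset.sum_congr rfl fun j _ => ?_
    rw [mul_smul_comm, mul_smul_comm, smul_smul, ← sub_smul]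
    congr 1
    rw [Int.emod_def]
  have hcoord : ∀ j, |b.repr (α * b j) i| ≤ m * ∑ l, |b.repr (b l * b j) i| := by
    intro j
    have : α * b j = ∑ l, b.repr α l • (b l * b j) := by
      conv_lhs => rw [← b.sum_repr α, Finset.sum_mul]
      refine Finset.sum_congr rfl fun l _ => ?_
      rw [smul_mul_assoc]
    rw [this, map_sum, Finsupp.finsetSum_apply, Finset.mul_sum]
    refine (Finset.abs_sum_le_sum_abs _ _).trans (Finset.sum_le_sum fun l _ => ?_)
    rw [map_zsmul, Finsupp.smul_apply, smul_eq_mul, abs_mul]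
    exact mul_le_mul_of_nonneg_right (hm l) (abs_nonneg _)
  have hk : n * b.repr (β - α * ∑ i, (c i / n) • b i) i = ∑ j, (c j % n) * b.repr (α * b j) i := by
    have h := congrArg (fun z => b.repr z i) key
    simp only [map_zsmul, map_sum, Finsupp.finsetSum_apply, Finsupp.smul_apply, smul_eq_mul] at h
    exact h
  have hb : n * |b.repr (β - α * ∑ i, (c i / n) • b i) i| ≤ n * ((1 + D' : ℕ) * m) := by
    rw [← abs_of_pos hn0, ← abs_mul, abs_of_pos hn0, hk]
    calc |∑ j, (c j % n) * b.repr (α * b j) i|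
        ≤ ∑ j, n * (m * ∑ l, |b.repr (b l * b j) i|) := by
          refine (Finset.abs_sum_le_sum_abs _ _).trans (Finset.sum_le_sum fun j _ => ?_)
          rw [abs_mul]
          refine mul_le_mul ?_ (hcoord j) (abs_nonneg _) hn0.le
          rw [abs_of_nonneg (Int.emod_nonneg _ hn0.ne')]
          exact (Int.emod_lt_of_pos _ hn0).le
      _ = n * (m * ∑ j, ∑ l, |b.repr (b l * b j) i|) := by
          rw [← Finset.mul_sum, ← Finset.mul_sum]
      _ ≤ n * ((1 + D' : ℕ) * m) := by
          refine mul_le_mul_of_nonneg_left ?_ hn0.le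
          rw [mul_comm]
          refine mul_le_mul_of_nonneg_right ?_ (by positivity)
          rw [hD']
          push_cast
          have := Finset.single_le_sum (f := fun i => ∑ j, ∑ l, |b.repr (b l * b j) i|)
            (fun i _ => Finset.sum_nonneg fun j _ => Finset.sum_nonneg fun l _ => abs_nonneg _)
            (Finset.mem_univ i)
          linarith
  exact le_of_mul_le_mul_left hb hn0

/-- number of points of a lattice box lying in an ideal -/
noncomputable def bpCount {k : Type*} [Field k] [NumberField k] {ι : Type*} [Fintype ι]
    (b : Module.Basis ι ℤ (𝓞 k)) (I : Ideal (𝓞 k)) (u : ι → ℤ) (N : ℤ) : ℕ :=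
  by
  classical
  exact ((Fintype.piFinset fun i => Finset.Ico (u i) (u i + N)).filter
    fun a => ∑ i, a i • b i ∈ I).card

lemma bp_avg {k : Type*} [Field k] [NumberField k] {ι : Type*} [Fintype ι]
    (b : Module.Basis ι ℤ (𝓞 k)) (I : Ideal (𝓞 k)) (hI : I ≠ ⊥) (r : ℤ)
    (hr : ∀ β : 𝓞 k, ∃ ρ : 𝓞 k, β - ρ ∈ I ∧ ∀ i, |b.repr ρ i| ≤ r) (u : ι → ℤ) (N : ℕ) :
    N ^ Fintype.card ι ≤ Ideal.absNorm I * bpCount b I (fun i => u i - r) (N + 2 * r) ∧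
    Ideal.absNorm I * bpCount b I (fun i => u i + r) (N - 2 * r) ≤ N ^ Fintype.card ι := by
  classical
  have : Finite (𝓞 k ⧸ I) := Ideal.finiteQuotientOfFreeOfNeBot I hI
  have : Fintype (𝓞 k ⧸ I) := Fintype.ofFinite _
  have hq : Ideal.absNorm I = (Finset.univ : Finset (𝓞 k ⧸ I)).card := by
    rw [Finset.card_univ, ← Nat.card_eq_fintype_card]; rfl
  have hs : ∀ c : 𝓞 k ⧸ I, ∃ ρ : 𝓞 k, Ideal.Quotient.mk I ρ = c ∧ ∀ i, |b.repr ρ i| ≤ r := by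
    intro c
    obtain ⟨β, rfl⟩ := Ideal.Quotient.mk_surjective c
    obtain ⟨ρ, h1, h2⟩ := hr β
    exact ⟨ρ, ((Ideal.Quotient.eq).mpr h1).symm, h2⟩
  choose σ hσ1 hσ2 using hs
  set B := Fintype.piFinset fun i => Finset.Ico (u i) (u i + N) with hB
  have hBcard : B.card = N ^ Fintype.card ι := by
    rw [hB, Fintype.card_piFinset]
    simp
  have hdc : ∑ c : 𝓞 k ⧸ I, (B.filter fun a => ∑ i, a i • b i + σ c ∈ I).card = B.card := by
    simp_rw [Finset.card_filter]
    rw [Finset.sum_comm, Finset.card_eq_sum_ones]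
    refine Finset.sum_congr rfl fun a _ => ?_
    rw [← Finset.card_filter, Finset.card_eq_one]
    refine ⟨- Ideal.Quotient.mk I (∑ i, a i • b i), ?_⟩
    ext c
    rw [Finset.mem_filter, Finset.mem_singleton, ← Ideal.Quotient.eq_zero_iff_mem, map_add, hσ1]
    simp [eq_neg_iff_add_eq_zero, add_comm]
  have hsum : ∀ (a : ι → ℤ) (ρ : 𝓞 k), ∑ i, (a i + b.repr ρ i) • b i = ∑ i, a i • b i + ρ := by
    intro a ρ
    simp_rw [add_smul]
    rw [Finset.sum_add_distrib, b.sum_repr]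
  rw [← hBcard, ← hdc, hq]
  constructor
  · rw [← smul_eq_mul]
    refine Finset.sum_le_card_nsmul _ _ _ fun c _ => ?_
    refine Finset.card_le_card_of_injOn (fun a i => a i + b.repr (σ c) i) ?_ ?_
    · intro a ha
      simp only [Finset.coe_filter, Set.mem_ofPred_eq, hB, Fintype.mem_piFinset, Finset.mem_Ico] at ha ⊢
      refine ⟨fun i => ?_, ?_⟩
      · have := abs_le.mp (hσ2 c i)
        have := ha.1 i
        constructor <;> omega
      · rw [hsum]; exact ha.2
    · intro a _ a' _ h
      funext i
      simpa using congrFun h i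
  · rw [← smul_eq_mul]
    refine Finset.card_nsmul_le_sum _ _ _ fun c _ => ?_
    refine Finset.card_le_card_of_injOn (fun a i => a i - b.repr (σ c) i) ?_ ?_
    · intro a ha
      simp only [Finset.coe_filter, Set.mem_ofPred_eq, hB, Fintype.mem_piFinset, Finset.mem_Ico] at ha ⊢
      refine ⟨fun i => ?_, ?_⟩
      · have := abs_le.mp (hσ2 c i)
        have := ha.1 i
        constructor <;> omega
      · rw [← hsum]; simpa using ha.2
    · intro a _ a' _ h
      funext i
      simpa using congrFun h i

lemma bp_pow_sub (n : ℕ) (a c : ℝ) (ha : 0 ≤ a) (hc : a ≤ c) :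
    c ^ (n + 1) - a ^ (n + 1) ≤ (n + 1) * (c - a) * c ^ n := by
  induction n with
  | zero => simp
  | succ n ih =>
    have h1 : a ^ (n + 1) ≤ c ^ (n + 1) := pow_le_pow_left₀ ha hc _
    have h2 : c * (c ^ (n + 1) - a ^ (n + 1)) ≤ c * ((n + 1) * (c - a) * c ^ n) :=
      mul_le_mul_of_nonneg_left ih (ha.trans hc)
    have h3 : (c - a) * a ^ (n + 1) ≤ (c - a) * c ^ (n + 1) :=
      mul_le_mul_of_nonneg_left h1 (by linarith)
    have e1 : c ^ (n + 1 + 1) - a ^ (n + 1 + 1) =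
      c * (c ^ (n + 1) - a ^ (n + 1)) + (c - a) * a ^ (n + 1) := by ring
    have e2 : ((n + 1 : ℕ) + 1 : ℝ) * (c - a) * c ^ (n + 1) =
      c * ((n + 1) * (c - a) * c ^ n) + (c - a) * c ^ (n + 1) := by push_cast; ring
    rw [e1, e2]
    linarith

/-- Counting points of an ideal in a box. -/
lemma bp_count {k : Type*} [Field k] [NumberField k] {ι : Type*} [Fintype ι] [Nonempty ι]
    (b : Module.Basis ι ℤ (𝓞 k)) (C₀ : ℝ) :
    ∃ C : ℝ, 0 < C ∧ ∀ (I : Ideal (𝓞 k)) (u : ι → ℤ) (N : ℕ), I ≠ ⊥ → 1 ≤ N →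
      (Ideal.absNorm I : ℝ) ≤ C₀ * (N : ℝ) ^ Fintype.card ι →
      |(bpCount b I u N : ℝ) - (N : ℝ) ^ Fintype.card ι / Ideal.absNorm I| ≤
        C * ((N : ℝ) ^ Fintype.card ι / N) *
          (Ideal.absNorm I : ℝ) ^ (-1 + 1 / (Fintype.card ι : ℝ)) := by
  obtain ⟨D, hD0, hD⟩ := bp_small_rep b
  obtain ⟨n, hn⟩ : ∃ n, Fintype.card ι = n + 1 :=
    Nat.exists_eq_succ_of_ne_zero Fintype.card_ne_zero
  set C₁ : ℝ := |C₀| + 1 with hC₁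
  have hC₁1 : 1 ≤ C₁ := by rw [hC₁]; linarith [abs_nonneg C₀]
  set A : ℝ := 1 + 2 * D * C₁ with hA
  have hD1 : (1 : ℝ) ≤ D := by exact_mod_cast hD0
  have hA1 : 1 ≤ A := by rw [hA]; nlinarith
  have hAn : 1 ≤ A ^ n := one_le_pow₀ hA1
  refine ⟨(n + 1) * (2 * D) * A ^ n, by positivity, ?_⟩
  intro I u N hI hN hq
  have hN1 : (1 : ℝ) ≤ N := by exact_mod_cast hN
  set q := Ideal.absNorm I with hqdef
  have hq0 : 0 < q := by
    rw [Nat.pos_iff_ne_zero, hqdef, Ne, Ideal.absNorm_eq_zero_iff]; exact hI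
  have hqR : (0 : ℝ) < q := by exact_mod_cast hq0
  set Q : ℝ := (q : ℝ) ^ (1 / (Fintype.card ι : ℝ)) with hQ
  have hQ0 : 0 < Q := by positivity
  have hQd : Q ^ (n + 1) = q := by
    rw [hQ, one_div, ← hn]
    exact Real.rpow_inv_natCast_pow hqR.le Fintype.card_ne_zero
  have hQq : (q : ℝ) ^ (-1 + 1 / (Fintype.card ι : ℝ)) = Q / q := by
    rw [Real.rpow_add hqR, Real.rpow_neg_one, hQ]; field_simp
  rw [hQq, hn]
  have hQN : Q ≤ C₁ * N := by
    by_contra! h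
    have h1 : (C₁ * N) ^ (n + 1) < Q ^ (n + 1) := pow_lt_pow_left₀ h (by positivity) (by omega)
    rw [hQd, mul_pow] at h1
    have h2 : C₀ ≤ C₁ ^ (n + 1) :=
      (le_abs_self C₀).trans ((by rw [hC₁]; linarith : |C₀| ≤ C₁).trans
        (le_self_pow₀ hC₁1 (by omega)))
    have h3 : C₀ * (N : ℝ) ^ (n + 1) ≤ C₁ ^ (n + 1) * (N : ℝ) ^ (n + 1) :=
      mul_le_mul_of_nonneg_right h2 (by positivity)
    rw [hn] at hq
    linarith
  set m := ⌊Q⌋₊ with hm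
  have hmQ : (m : ℝ) ≤ Q := Nat.floor_le hQ0.le
  have hqm : q < (m + 1) ^ Fintype.card ι := by
    have : (q : ℝ) < ((m : ℝ) + 1) ^ (n + 1) := by
      rw [← hQd]
      exact pow_lt_pow_left₀ (Nat.lt_floor_add_one Q) hQ0.le (by omega)
    rw [hn]
    exact_mod_cast this
  obtain ⟨α, hαI, hα0, hαm⟩ := bp_exists_small b I hI m hqm
  have hr : ∀ β : 𝓞 k, ∃ ρ : 𝓞 k, β - ρ ∈ I ∧ ∀ i, |b.repr ρ i| ≤ ((D * m : ℕ) : ℤ) := by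
    intro β
    obtain ⟨γ, hγ⟩ := hD α m hα0 hαm β
    refine ⟨β - α * γ, ?_, fun i => by push_cast; exact hγ i⟩
    rw [sub_sub_cancel]
    exact I.mul_mem_right _ hαI
  set r := D * m with hrdef
  have hrQ : (r : ℝ) ≤ D * Q := by
    rw [hrdef]; push_cast; exact mul_le_mul_of_nonneg_left hmQ (by positivity)
  have hrN : (N : ℝ) + 2 * r ≤ A * N := by
    rw [hA]
    have : (D : ℝ) * Q ≤ D * (C₁ * N) := mul_le_mul_of_nonneg_left hQN (by positivity)
    linarith
  have hNN : (N : ℝ) ^ (n + 1) / N = (N : ℝ) ^ n := by rw [pow_succ]; field_simp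
  rw [hNN]
  have hup : (q : ℝ) * bpCount b I u N ≤ ((N : ℝ) + 2 * r) ^ (n + 1) := by
    have h := (bp_avg b I hI r hr (fun i => u i - r) (N + 2 * r)).2
    have e1 : (fun i => u i - (r : ℤ) + r) = u := by funext i; ring
    have e2 : (((N + 2 * r : ℕ) : ℤ) - 2 * r) = N := by push_cast; ring
    simp only [e1] at h
    rw [e2, hn] at h
    exact_mod_cast h
  have hlo : (N : ℝ) ^ (n + 1) - (n + 1) * (2 * r) * (N : ℝ) ^ n ≤ q * bpCount b I u N := by
    by_cases hc : 2 * r ≤ N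
    · have h := (bp_avg b I hI r hr (fun i => u i + r) (N - 2 * r)).1
      have e1 : (fun i => u i + (r : ℤ) - r) = u := by funext i; ring
      have e2 : (((N - 2 * r : ℕ) : ℤ) + 2 * r) = N := by omega
      simp only [e1] at h
      rw [e2, hn] at h
      have h' : (((N - 2 * r : ℕ) : ℝ)) ^ (n + 1) ≤ q * bpCount b I u N := by exact_mod_cast h
      rw [Nat.cast_sub hc] at h'
      push_cast at h'
      have hc' : (2 : ℝ) * r ≤ N := by exact_mod_cast hc
      have := bp_pow_sub n ((N : ℝ) - 2 * r) N (by linarith) (by linarith [r.cast_nonneg (α := ℝ)])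
      rw [sub_sub_cancel] at this
      linarith
    · have hc' : (N : ℝ) ≤ 2 * r := by
        have : N ≤ 2 * r := by omega
        exact_mod_cast this
      have h1 : (N : ℝ) ^ (n + 1) ≤ (n + 1) * (2 * r) * (N : ℝ) ^ n := by
        rw [pow_succ, mul_comm]
        refine mul_le_mul_of_nonneg_right ?_ (by positivity)
        have : (0 : ℝ) ≤ n * (2 * r) := by positivity
        linarith
      have : (0 : ℝ) ≤ q * bpCount b I u N := by positivity
      linarith
  have hb := bp_pow_sub n (N : ℝ) (N + 2 * r) (by positivity) (by linarith [r.cast_nonneg (α := ℝ)])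
  have hE1 : (n + 1) * ((N : ℝ) + 2 * r - N) * (N + 2 * r) ^ n ≤
      (n + 1) * (2 * (D * Q)) * (A ^ n * (N : ℝ) ^ n) := by
    have h1 : ((N : ℝ) + 2 * r) ^ n ≤ A ^ n * (N : ℝ) ^ n := by
      rw [← mul_pow]; exact pow_le_pow_left₀ (by positivity) hrN _
    refine mul_le_mul ?_ h1 (by positivity) (by positivity)
    refine mul_le_mul_of_nonneg_left ?_ (by positivity)
    linarith
  have hE2 : (n + 1) * (2 * r) * (N : ℝ) ^ n ≤
      (n + 1) * (2 * (D * Q)) * (A ^ n * (N : ℝ) ^ n) := by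
    refine mul_le_mul ?_ ?_ (by positivity) (by positivity)
    · refine mul_le_mul_of_nonneg_left ?_ (by positivity)
      linarith
    · exact le_mul_of_one_le_left (by positivity) hAn
  have e : (bpCount b I u N : ℝ) - (N : ℝ) ^ (n + 1) / q =
      (q * bpCount b I u N - (N : ℝ) ^ (n + 1)) / q := by field_simp
  have e3 : (n + 1) * (2 * (D : ℝ)) * A ^ n * (N : ℝ) ^ n * (Q / q) =
      ((n + 1) * (2 * (D * Q)) * (A ^ n * (N : ℝ) ^ n)) / q := by ring
  rw [e, e3, abs_div, abs_of_pos hqR]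
  refine div_le_div_of_nonneg_right ?_ hqR.le
  rw [abs_le]
  constructor <;> linarith

section
variable {k : Type*} [Field k] [NumberField k]

lemma bp_two_le (v : HeightOneSpectrum (𝓞 k)) : 2 ≤ Ideal.absNorm v.asIdeal := by
  have h0 : Ideal.absNorm v.asIdeal ≠ 0 := by
    rw [Ne, Ideal.absNorm_eq_zero_iff]; exact v.ne_bot
  have h1 : Ideal.absNorm v.asIdeal ≠ 1 := by
    rw [Ne, Ideal.absNorm_eq_one_iff]; exact v.isPrime.ne_top
  omega

lemma bp_log_pos (v : HeightOneSpectrum (𝓞 k)) : 0 < Real.log (Ideal.absNorm v.asIdeal) := by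
  apply Real.log_pos
  have := bp_two_le v
  have : (2 : ℝ) ≤ Ideal.absNorm v.asIdeal := by exact_mod_cast this
  linarith

variable (k) in
lemma bp_finite (t : ℝ) :
    {v : HeightOneSpectrum (𝓞 k) | (Ideal.absNorm v.asIdeal : ℝ) ≤ t}.Finite := by
  have h := (Ideal.finite_setOfPred_absNorm_le (S := 𝓞 k) ⌊t⌋₊)
  refine Set.Finite.of_finite_image (f := HeightOneSpectrum.asIdeal) (h.subset ?_) ?_
  · rintro _ ⟨v, hv, rfl⟩
    exact Nat.le_floor hv
  · intro v _ w _ h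
    exact HeightOneSpectrum.ext h

variable (k) in
/-- primes of norm at most `t` -/
noncomputable def bpP (t : ℝ) : Finset (HeightOneSpectrum (𝓞 k)) := (bp_finite k t).toFinset

lemma bp_mem {t : ℝ} {v : HeightOneSpectrum (𝓞 k)} :
    v ∈ bpP k t ↔ (Ideal.absNorm v.asIdeal : ℝ) ≤ t := by
  simp [bpP]

lemma bp_mono {s t : ℝ} (h : s ≤ t) : bpP k s ⊆ bpP k t := by
  intro v hv
  rw [bp_mem] at *
  linarith

lemma bp_sum_log_le (s : Finset (HeightOneSpectrum (𝓞 k))) (I : Ideal (𝓞 k)) (hI : I ≠ ⊥)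
    (h : ∀ v ∈ s, v.asIdeal ∣ I) :
    ∑ v ∈ s, Real.log (Ideal.absNorm v.asIdeal) ≤ Real.log (Ideal.absNorm I) := by
  classical
  have hinj : Function.Injective (HeightOneSpectrum.asIdeal : HeightOneSpectrum (𝓞 k) → _) :=
    fun v w h => HeightOneSpectrum.ext h
  have hd : ∏ v ∈ s, v.asIdeal ∣ I := by
    have := Finset.prod_primes_dvd (s := s.image HeightOneSpectrum.asIdeal) I
      (by
        intro P hP
        obtain ⟨v, _, rfl⟩ := Finset.mem_image.mp hP
        exact v.prime)
      (by
        intro P hP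
        obtain ⟨v, hv, rfl⟩ := Finset.mem_image.mp hP
        exact h v hv)
    rwa [Finset.prod_image (fun v _ w _ h => hinj h)] at this
  have h0 : Ideal.absNorm I ≠ 0 := by
    rw [Ne, Ideal.absNorm_eq_zero_iff]; exact hI
  have hle : ∏ v ∈ s, Ideal.absNorm v.asIdeal ≤ Ideal.absNorm I := by
    rw [← map_prod]
    exact Nat.le_of_dvd (Nat.pos_of_ne_zero h0) (map_dvd Ideal.absNorm hd)
  rw [← Real.log_prod (fun v _ => by have := bp_two_le v; positivity)]
  apply Real.log_le_log
  · exact Finset.prod_pos fun v _ => by have := bp_two_le v; positivity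
  · exact_mod_cast hle

lemma bp_theta (t : ℝ) (ht : 0 ≤ t) :
    ∑ v ∈ bpP k t, Real.log (Ideal.absNorm v.asIdeal) ≤
      Module.finrank ℚ k * Real.log 4 * t := by
  have hp0 : primorial ⌊t⌋₊ ≠ 0 := (primorial_pos _).ne'
  have hI : Ideal.span {((primorial ⌊t⌋₊ : ℕ) : 𝓞 k)} ≠ ⊥ := by
    rw [Ne, Ideal.span_singleton_eq_bot]; exact_mod_cast hp0
  refine (bp_sum_log_le _ _ hI ?_).trans ?_
  · intro v hv
    rw [bp_mem] at hv
    rw [Ideal.dvd_span_singleton]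
    have hp := v.isPrime
    have hmem : ((Ideal.absNorm v.asIdeal : ℕ) : 𝓞 k) ∈ v.asIdeal := Ideal.absNorm_mem _
    have hn0 : Ideal.absNorm v.asIdeal ≠ 0 := by have := bp_two_le v; omega
    have hex : ∃ p ∈ (Ideal.absNorm v.asIdeal).primeFactorsList, (p : 𝓞 k) ∈ v.asIdeal := by
      rw [← Nat.prod_primeFactorsList hn0] at hmem
      rw [Nat.cast_list_prod] at hmem
      have := (Ideal.IsPrime.multiset_prod_mem_iff_exists_mem hp
        (Multiset.ofList ((Ideal.absNorm v.asIdeal).primeFactorsList.map (Nat.cast : ℕ → 𝓞 k)))).mp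
        (by simpa using hmem)
      obtain ⟨x, hx, hxv⟩ := this
      simp only [Multiset.mem_coe, List.mem_map] at hx
      obtain ⟨p, hp, rfl⟩ := hx
      exact ⟨p, hp, hxv⟩
    obtain ⟨p, hpl, hpv⟩ := hex
    have hpp := Nat.prime_of_mem_primeFactorsList hpl
    have hple : p ≤ ⌊t⌋₊ := (Nat.le_of_dvd (Nat.pos_of_ne_zero hn0)
      (Nat.dvd_of_mem_primeFactorsList hpl)).trans (Nat.le_floor hv)
    have hdvd : p ∣ primorial ⌊t⌋₊ := by
      unfold primorial
      apply Finset.dvd_prod_of_mem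
      simp [hpp]; omega
    obtain ⟨c, hc⟩ := hdvd
    rw [hc, Nat.cast_mul]
    exact v.asIdeal.mul_mem_right _ hpv
  · rw [Ideal.absNorm_span_natCast, RingOfIntegers.rank, Nat.cast_pow, Real.log_pow, mul_assoc]
    refine mul_le_mul_of_nonneg_left ?_ (by positivity)
    have h1 : (primorial ⌊t⌋₊ : ℝ) ≤ 4 ^ ⌊t⌋₊ := by exact_mod_cast primorial_le_four_pow _
    have h2 : Real.log (primorial ⌊t⌋₊) ≤ Real.log (4 ^ ⌊t⌋₊) :=
      Real.log_le_log (by exact_mod_cast primorial_pos _) h1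
    rw [Real.log_pow] at h2
    have h3 : (⌊t⌋₊ : ℝ) ≤ t := Nat.floor_le ht
    have : 0 < Real.log 4 := Real.log_pos (by norm_num)
    nlinarith

lemma bp_log_le (I : Ideal (𝓞 k)) (hI : I ≠ ⊥) (Y : ℝ) (J : ℕ)
    (hY : (Ideal.absNorm I : ℝ) ≤ Y) (hJ : Ideal.absNorm I < 2 ^ J) :
    Real.log (Ideal.absNorm I) ≤ ∑ v ∈ bpP k Y, ∑ j ∈ Finset.Icc 1 J,
      Real.log (Ideal.absNorm v.asIdeal) * Set.indicator {K : Ideal (𝓞 k) | K ∣ I} (1 : Ideal (𝓞 k) → ℝ) (v.asIdeal ^ j) := by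
  classical
  have h0 : Ideal.absNorm I ≠ 0 := by
    rw [Ne, Ideal.absNorm_eq_zero_iff]; exact hI
  have hfin : (Function.mulSupport fun v : HeightOneSpectrum (𝓞 k) => v.maxPowDividing I).Finite :=
    Ideal.hasFiniteMulSupport hI
  have hprod := Ideal.finprod_heightOneSpectrum_factorization hI
  rw [finprod_eq_prod _ hfin] at hprod
  set s := hfin.toFinset with hs
  have hdvd : ∀ v ∈ s, v.maxPowDividing I ∣ I := by
    intro v hv
    conv_rhs => rw [← hprod]
    exact Finset.dvd_prod_of_mem _ hv
  have hnorm_le : ∀ K : Ideal (𝓞 k), K ∣ I → Ideal.absNorm K ≤ Ideal.absNorm I := fun K hK =>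
    Nat.le_of_dvd (Nat.pos_of_ne_zero h0) (map_dvd Ideal.absNorm hK)
  have hcnt : ∀ v ∈ s, ∃ n : ℕ, n ≠ 0 ∧ v.maxPowDividing I = v.asIdeal ^ n := by
    intro v hv
    refine ⟨_, ?_, rfl⟩
    intro h
    rw [hs, Set.Finite.mem_toFinset, Function.mem_mulSupport] at hv
    apply hv
    unfold HeightOneSpectrum.maxPowDividing
    rw [h, pow_zero]
  have hsub : s ⊆ bpP k Y := by
    intro v hv
    obtain ⟨n, hn0, hn⟩ := hcnt v hv
    rw [bp_mem]
    refine le_trans ?_ hY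
    have := hnorm_le v.asIdeal ((dvd_pow_self _ hn0).trans (hn ▸ hdvd v hv))
    exact_mod_cast this
  have hlog : Real.log (Ideal.absNorm I) = ∑ v ∈ s, Real.log (Ideal.absNorm (v.maxPowDividing I)) := by
    conv_lhs => rw [← hprod, map_prod, Nat.cast_prod]
    rw [Real.log_prod]
    intro v hv
    obtain ⟨n, hn0, hn⟩ := hcnt v hv
    rw [hn, map_pow]
    have := bp_two_le v
    positivity
  rw [hlog]
  refine (Finset.sum_le_sum (fun v hv => ?_)).trans
    (Finset.sum_le_sum_of_subset_of_nonneg hsub (fun v _ _ => ?_))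
  · obtain ⟨n, hn0, hn⟩ := hcnt v hv
    rw [hn, map_pow, Nat.cast_pow, Real.log_pow]
    have hd : v.asIdeal ^ n ∣ I := hn ▸ hdvd v hv
    have hnJ : n ≤ J := by
      have h1 := hnorm_le _ hd
      rw [map_pow] at h1
      have h2 : 2 ^ n ≤ Ideal.absNorm v.asIdeal ^ n := Nat.pow_le_pow_left (bp_two_le v) n
      have h3 : 2 ^ n < 2 ^ J := by omega
      exact ((Nat.pow_lt_pow_iff_right (by norm_num)).mp h3).le
    rw [← Finset.mul_sum, mul_comm]
    refine mul_le_mul_of_nonneg_left ?_ (bp_log_pos v).le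
    calc (n : ℝ) = ∑ j ∈ Finset.Icc 1 n, (1 : ℝ) := by simp
      _ ≤ ∑ j ∈ Finset.Icc 1 n, Set.indicator {K : Ideal (𝓞 k) | K ∣ I} (1 : Ideal (𝓞 k) → ℝ) (v.asIdeal ^ j) := by
        refine Finset.sum_le_sum fun j hj => ?_
        rw [Set.indicator_of_mem]
        · simp
        · exact (pow_dvd_pow _ (Finset.mem_Icc.mp hj).2).trans hd
      _ ≤ _ := by
        refine Finset.sum_le_sum_of_subset_of_nonneg (Finset.Icc_subset_Icc_right hnJ) ?_
        intro j _ _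
        exact Set.indicator_nonneg (fun _ _ => by simp) _
  · refine Finset.sum_nonneg fun j _ => mul_nonneg (bp_log_pos v).le ?_
    exact Set.indicator_nonneg (fun _ _ => by simp) _

lemma bp_box {ι : Type*} [Fintype ι] (b : Module.Basis ι ℤ (𝓞 k)) :
    ∃ (c : ℕ → ι → ℤ) (C : ℝ), 1 ≤ C ∧ ∀ (N : ℕ) (a : ι → ℤ), 1 ≤ N →
      (∀ i, c N i ≤ a i ∧ a i < c N i + N) →
      (N : ℝ) ^ Fintype.card ι ≤ Ideal.absNorm (Ideal.span {∑ i, a i • b i}) ∧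
      (Ideal.absNorm (Ideal.span {∑ i, a i • b i}) : ℝ) ≤ C * (N : ℝ) ^ Fintype.card ι := by
  classical
  have hcard : Fintype.card ι = Fintype.card (k →ₐ[ℚ] ℂ) := by
    rw [AlgHom.card, ← RingOfIntegers.rank, Module.finrank_eq_card_basis b]
  obtain ⟨A, hA⟩ := exists_nat_ge (∑ σ : k →ₐ[ℚ] ℂ, ∑ i, ‖σ (b i : k)‖)
  have hAσ : ∀ σ : k →ₐ[ℚ] ℂ, ∑ i, ‖σ (b i : k)‖ ≤ A := fun σ =>
    (Finset.single_le_sum (f := fun σ : k →ₐ[ℚ] ℂ => ∑ i, ‖σ (b i : k)‖)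
      (fun σ _ => Finset.sum_nonneg fun i _ => norm_nonneg _) (Finset.mem_univ σ)).trans hA
  refine ⟨fun N => b.repr ((((A + 1) * N : ℕ) : 𝓞 k)), (2 * A + 1) ^ Fintype.card ι,
    one_le_pow₀ (by linarith [A.cast_nonneg (α := ℝ)]), ?_⟩
  intro N a hN ha
  set α := ∑ i, a i • b i with hα
  have hnorm : (Ideal.absNorm (Ideal.span {α}) : ℝ) = ∏ σ : k →ₐ[ℚ] ℂ, ‖σ (α : k)‖ := by
    rw [Ideal.absNorm_span_singleton, ← norm_prod, ← Algebra.norm_eq_prod_embeddings ℚ ℂ (α : k),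
      ← Algebra.coe_norm_int]
    simp
  have hdec : α = (((A + 1) * N : ℕ) : 𝓞 k) + ∑ i, (a i - b.repr ((((A + 1) * N : ℕ) : 𝓞 k)) i) • b i := by
    simp_rw [sub_smul]
    rw [Finset.sum_sub_distrib, b.sum_repr]
    ring
  have hσ : ∀ σ : k →ₐ[ℚ] ℂ, ‖σ (α : k) - ((A + 1) * N : ℝ)‖ ≤ A * N := by
    intro σ
    have : σ (α : k) - ((A + 1) * N : ℝ) =
        ∑ i, ((a i - b.repr ((((A + 1) * N : ℕ) : 𝓞 k)) i : ℤ) : ℂ) * σ (b i : k) := by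
      conv_lhs => rw [hdec]
      simp [map_add, map_sum]
    rw [this]
    calc _ ≤ ∑ i, N * ‖σ (b i : k)‖ := by
          refine (norm_sum_le _ _).trans (Finset.sum_le_sum fun i _ => ?_)
          rw [norm_mul]
          refine mul_le_mul_of_nonneg_right ?_ (norm_nonneg _)
          rw [Complex.norm_intCast]
          have h1 := ha i
          have h2 : |a i - b.repr ((((A + 1) * N : ℕ) : 𝓞 k)) i| ≤ N := by
            rw [abs_le]; constructor <;> linarith [h1.1, h1.2]
          exact_mod_cast h2
      _ = N * ∑ i, ‖σ (b i : k)‖ := by rw [Finset.mul_sum]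
      _ ≤ A * N := by
          rw [mul_comm]
          exact mul_le_mul_of_nonneg_right (hAσ σ) (by positivity)
  have hn1 : ‖((((A + 1) * N : ℝ) : ℝ) : ℂ)‖ = (A + 1) * N := by
    rw [Complex.norm_real, Real.norm_of_nonneg (by positivity)]
  rw [hnorm, hcard, ← mul_pow]
  constructor
  · rw [← Finset.card_univ, ← Finset.prod_const]
    refine Finset.prod_le_prod (fun _ _ => by positivity) fun σ _ => ?_
    have h1 := hσ σ
    have h2 := norm_sub_norm_le ((((A + 1) * N : ℝ) : ℝ) : ℂ) (σ (α : k))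
    rw [norm_sub_rev, hn1] at h2
    push_cast at h1 h2
    linarith
  · rw [← Finset.card_univ, ← Finset.prod_const]
    refine Finset.prod_le_prod (fun _ _ => by positivity) fun σ _ => ?_
    have h1 := hσ σ
    have h2 := norm_sub_norm_le (σ (α : k)) ((((A + 1) * N : ℝ) : ℝ) : ℂ)
    rw [hn1] at h2
    push_cast at h1 h2
    linarith

lemma bp_dyadic (φ : ℝ → ℝ) (hφ : ∀ x y, 1 ≤ x → x ≤ y → φ y ≤ φ x) (hφ0 : ∀ x, 1 ≤ x → 0 ≤ φ x)
    (m : ℕ) :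
    ∑ v ∈ bpP k (2 ^ m), Real.log (Ideal.absNorm v.asIdeal) * φ (Ideal.absNorm v.asIdeal) ≤
      ∑ i ∈ Finset.range m, Module.finrank ℚ k * Real.log 4 * 2 ^ (i + 1) * φ (2 ^ i) := by
  classical
  induction m with
  | zero =>
    have : bpP k (2 ^ 0) = ∅ := by
      ext v
      rw [bp_mem]
      have : (2 : ℝ) ≤ Ideal.absNorm v.asIdeal := by exact_mod_cast bp_two_le v
      simp only [pow_zero, Finset.notMem_empty, iff_false, not_le]
      linarith
    rw [this]; simp
  | succ m ih =>
    have hsub : bpP k (2 ^ m) ⊆ bpP k (2 ^ (m + 1)) :=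
      bp_mono (pow_le_pow_right₀ (by norm_num) (by omega))
    rw [← Finset.sum_sdiff hsub, Finset.sum_range_succ, add_comm]
    have h1 : (1 : ℝ) ≤ 2 ^ m := one_le_pow₀ (by norm_num)
    refine add_le_add ih ?_
    calc _ ≤ ∑ v ∈ bpP k (2 ^ (m + 1)) \ bpP k (2 ^ m),
          Real.log (Ideal.absNorm v.asIdeal) * φ (2 ^ m) := by
          refine Finset.sum_le_sum fun v hv => ?_
          rw [Finset.mem_sdiff, bp_mem, bp_mem] at hv
          exact mul_le_mul_of_nonneg_left (hφ _ _ h1 (not_le.mp hv.2).le) (bp_log_pos v).le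
      _ = (∑ v ∈ bpP k (2 ^ (m + 1)) \ bpP k (2 ^ m),
          Real.log (Ideal.absNorm v.asIdeal)) * φ (2 ^ m) := by rw [Finset.sum_mul]
      _ ≤ _ := by
          refine mul_le_mul_of_nonneg_right ?_ (hφ0 _ h1)
          refine le_trans (Finset.sum_le_sum_of_subset_of_nonneg Finset.sdiff_subset
            (fun v _ _ => (bp_log_pos v).le)) (bp_theta _ (by positivity))
end

section
variable {k : Type*} [Field k] [NumberField k]

lemma bp_exists_pow (Z : ℝ) (hZ : 1 ≤ Z) : ∃ m : ℕ, Z ≤ 2 ^ m ∧ (2 : ℝ) ^ m ≤ 2 * Z := by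
  obtain ⟨n, h1, h2⟩ := exists_nat_pow_near hZ (by norm_num : (1 : ℝ) < 2)
  exact ⟨n + 1, h2.le, by rw [pow_succ]; linarith⟩

variable (k) in
lemma bp_err1 (d : ℕ) (hd : 1 ≤ d) : ∃ E : ℝ, 0 < E ∧ ∀ Z : ℝ, 1 ≤ Z →
    ∑ v ∈ bpP k Z, Real.log (Ideal.absNorm v.asIdeal) *
      (Ideal.absNorm v.asIdeal : ℝ) ^ (-1 + 1 / (d : ℝ)) ≤ E * Z ^ (1 / (d : ℝ)) := by
  set c : ℝ := Module.finrank ℚ k * Real.log 4 with hc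
  have hc0 : 0 < c := mul_pos (by exact_mod_cast Module.finrank_pos) (Real.log_pos (by norm_num))
  have hd0 : (1 : ℝ) ≤ d := by exact_mod_cast hd
  set x : ℝ := 2 ^ (1 / (d : ℝ)) with hx
  have hx1 : 1 < x := Real.one_lt_rpow (by norm_num) (by positivity)
  have hx1' : 0 < x - 1 := by linarith
  refine ⟨2 * c / (x - 1) * x, by positivity, fun Z hZ => ?_⟩
  obtain ⟨m, h1, h2⟩ := bp_exists_pow Z hZ
  have hexp : -1 + 1 / (d : ℝ) ≤ 0 := by
    have : 1 / (d : ℝ) ≤ 1 := by rw [div_le_one (by linarith)]; exact hd0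
    linarith
  have key := bp_dyadic (k := k) (fun y => y ^ (-1 + 1 / (d : ℝ)))
    (fun y z hy hyz => Real.rpow_le_rpow_of_nonpos (by linarith) hyz hexp)
    (fun y hy => Real.rpow_nonneg (by linarith) _) m
  refine (Finset.sum_le_sum_of_subset_of_nonneg (bp_mono h1) (fun v _ _ => ?_)).trans
    (key.trans ?_)
  · exact mul_nonneg (bp_log_pos v).le (Real.rpow_nonneg (by positivity) _)
  · have hterm : ∀ i ∈ Finset.range m, Module.finrank ℚ k * Real.log 4 * 2 ^ (i + 1) *
        ((2 : ℝ) ^ i) ^ (-1 + 1 / (d : ℝ)) = 2 * c * x ^ i := by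
      intro i _
      rw [← hc, Real.rpow_add (by positivity), Real.rpow_neg_one, hx, ← Real.rpow_natCast 2 i,
        ← Real.rpow_natCast ((2 : ℝ) ^ (1 / (d : ℝ))) i, ← Real.rpow_mul (by norm_num),
        ← Real.rpow_mul (by norm_num), Real.rpow_natCast, pow_succ, mul_comm (i : ℝ)]
      field_simp
    rw [Finset.sum_congr rfl hterm, ← Finset.mul_sum, geom_sum_eq hx1.ne']
    have hxm : x ^ m ≤ x * Z ^ (1 / (d : ℝ)) := by
      rw [hx, ← Real.mul_rpow (by norm_num) (by linarith), ← Real.rpow_natCast,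
        ← Real.rpow_mul (by norm_num), mul_comm (1 / (d : ℝ)), Real.rpow_mul (by norm_num),
        Real.rpow_natCast]
      exact Real.rpow_le_rpow (by positivity) h2 (by positivity)
    calc 2 * c * ((x ^ m - 1) / (x - 1)) = 2 * c / (x - 1) * (x ^ m - 1) := by ring
      _ ≤ 2 * c / (x - 1) * (x * Z ^ (1 / (d : ℝ))) :=
        mul_le_mul_of_nonneg_left (by linarith) (by positivity)
      _ = _ := by ring

variable (k) in
lemma bp_err2 : ∃ E : ℝ, 0 < E ∧ ∀ Z : ℝ, 1 ≤ Z →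
    ∑ v ∈ bpP k Z, Real.log (Ideal.absNorm v.asIdeal) *
      ((Ideal.absNorm v.asIdeal : ℝ) ^ 2)⁻¹ ≤ E := by
  set c : ℝ := Module.finrank ℚ k * Real.log 4 with hc
  have hc0 : 0 < c := mul_pos (by exact_mod_cast Module.finrank_pos) (Real.log_pos (by norm_num))
  refine ⟨4 * c, by positivity, fun Z hZ => ?_⟩
  obtain ⟨m, h1, h2⟩ := bp_exists_pow Z hZ
  have key := bp_dyadic (k := k) (fun y => (y ^ 2)⁻¹)
    (fun y z hy hyz => inv_anti₀ (by positivity) (pow_le_pow_left₀ (by linarith) hyz 2))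
    (fun y hy => by positivity) m
  refine (Finset.sum_le_sum_of_subset_of_nonneg (bp_mono h1) (fun v _ _ => ?_)).trans
    (key.trans ?_)
  · exact mul_nonneg (bp_log_pos v).le (by positivity)
  · have hterm : ∀ i ∈ Finset.range m, Module.finrank ℚ k * Real.log 4 * 2 ^ (i + 1) *
        (((2 : ℝ) ^ i) ^ 2)⁻¹ = 2 * c * (1 / 2) ^ i := by
      intro i _
      rw [← hc, pow_succ, one_div, inv_pow]
      field_simp
    rw [Finset.sum_congr rfl hterm, ← Finset.mul_sum, geom_sum_eq (by norm_num)]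
    have : (0 : ℝ) < (1 / 2) ^ m := by positivity
    have e : (((1 : ℝ) / 2) ^ m - 1) / (1 / 2 - 1) = 2 - 2 * (1 / 2) ^ m := by ring
    rw [e]
    nlinarith

lemma bp_sum_ind {ι : Type*} [Fintype ι] [DecidableEq ι] (b : Module.Basis ι ℤ (𝓞 k))
    (I : Ideal (𝓞 k)) (u : ι → ℤ) (N : ℤ) :
    ∑ a ∈ Fintype.piFinset (fun i => Finset.Ico (u i) (u i + N)),
      Set.indicator {K : Ideal (𝓞 k) | K ∣ Ideal.span {∑ i, a i • b i}} (1 : Ideal (𝓞 k) → ℝ) I =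
      bpCount b I u N := by
  classical
  unfold bpCount
  rw [Finset.card_filter, Nat.cast_sum]
  refine Finset.sum_congr (by congr!) fun a _ => ?_
  simp only [Set.indicator, Set.mem_ofPred_eq, Ideal.dvd_span_singleton, Pi.one_apply]
  split_ifs <;> simp

lemma bp_geom (q : ℝ) (hq : 2 ≤ q) (J : ℕ) :
    ∑ j ∈ Finset.Icc 2 J, (q ^ j)⁻¹ ≤ 2 * (q ^ 2)⁻¹ := by
  have h : ∀ J : ℕ, 1 ≤ J → ∑ j ∈ Finset.Icc 2 J, (q ^ j)⁻¹ ≤ 2 * (q ^ 2)⁻¹ - (q ^ J)⁻¹ * (2 * q⁻¹) := by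
    intro J hJ
    induction J, hJ using Nat.le_induction with
    | base => simp; field_simp; norm_num
    | succ n hn ih =>
      rw [Finset.sum_Icc_succ_top (by omega)]
      have h1 : (q ^ (n + 1))⁻¹ * (2 * q⁻¹) ≤ (q ^ (n + 1))⁻¹ := by
        have : 2 * q⁻¹ ≤ 1 := by
          rw [← div_eq_mul_inv, div_le_one (by linarith)]; exact hq
        have h0 : 0 ≤ (q ^ (n + 1))⁻¹ := by positivity
        nlinarith
      have h2 : (q ^ n)⁻¹ * (2 * q⁻¹) = 2 * (q ^ (n + 1))⁻¹ := by
        rw [pow_succ, mul_inv]; ring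
      linarith
  rcases Nat.eq_zero_or_pos J with rfl | hJ
  · simp
    positivity
  · have := h J hJ
    have h0 : 0 ≤ (q ^ J)⁻¹ * (2 * q⁻¹) := by positivity
    linarith

lemma bp_rpow_inv (d : ℕ) (hd : 1 ≤ d) (C N : ℝ) (hC : 1 ≤ C) (hN : 0 ≤ N) :
    (C * N ^ d) ^ (1 / (d : ℝ)) ≤ C * N := by
  have h1 : C * N ^ d ≤ (C * N) ^ d := by
    rw [mul_pow]
    exact mul_le_mul_of_nonneg_right (le_self_pow₀ hC (by omega)) (by positivity)
  calc (C * N ^ d) ^ (1 / (d : ℝ)) ≤ ((C * N) ^ d) ^ (1 / (d : ℝ)) :=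
        Real.rpow_le_rpow (by positivity) h1 (by positivity)
    _ = C * N := by
        rw [one_div]; exact Real.pow_rpow_inv_natCast (by positivity) (by omega)

lemma bp_upper {ι : Type*} [Fintype ι] [Nonempty ι] (b : Module.Basis ι ℤ (𝓞 k)) :
    ∃ R : ℝ, ∀ N : ℕ, 1 ≤ N →
      ∑ v ∈ bpP k ((N : ℝ) ^ Fintype.card ι),
        Real.log (Ideal.absNorm v.asIdeal) / Ideal.absNorm v.asIdeal ≤
        Real.log ((N : ℝ) ^ Fintype.card ι) + R := by
  classical
  obtain ⟨c, C₂, hC₂, hbox⟩ := bp_box b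
  obtain ⟨C, hC, hcount⟩ := bp_count b 1
  have hd : 1 ≤ Fintype.card ι := Fintype.card_pos
  obtain ⟨E, hE, herr⟩ := bp_err1 k (Fintype.card ι) hd
  set d := Fintype.card ι with hddef
  refine ⟨Real.log C₂ + C * E, fun N hN => ?_⟩
  have hN1 : (1 : ℝ) ≤ N := by exact_mod_cast hN
  have hNd : (1 : ℝ) ≤ (N : ℝ) ^ d := one_le_pow₀ hN1
  set B := Fintype.piFinset (fun i => Finset.Ico (c N i) (c N i + (N : ℤ))) with hB
  have hBmem : ∀ a ∈ B, ∀ i, c N i ≤ a i ∧ a i < c N i + N := by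
    intro a ha i
    simpa using (Fintype.mem_piFinset.mp ha) i
  have hBcard : (B.card : ℝ) = (N : ℝ) ^ d := by
    rw [hB, Fintype.card_piFinset]; simp [hddef]
  have h1 : ∀ a ∈ B, ∑ v ∈ bpP k ((N : ℝ) ^ d), Real.log (Ideal.absNorm v.asIdeal) *
      Set.indicator {K : Ideal (𝓞 k) | K ∣ Ideal.span {∑ i, a i • b i}} (1 : Ideal (𝓞 k) → ℝ) v.asIdeal
      ≤ Real.log (C₂ * (N : ℝ) ^ d) := by
    intro a ha
    obtain ⟨hl, hu⟩ := hbox N a hN (hBmem a ha)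
    have hI : Ideal.span {∑ i, a i • b i} ≠ ⊥ := by
      intro h
      rw [h] at hl
      simp only [Ideal.absNorm_bot, Nat.cast_zero] at hl
      linarith
    have := bp_sum_log_le ((bpP k ((N : ℝ) ^ d)).filter
      (fun v => v.asIdeal ∣ Ideal.span {∑ i, a i • b i})) _ hI (fun v hv => (Finset.mem_filter.mp hv).2)
    rw [Finset.sum_filter] at this
    refine le_trans (le_of_eq ?_) (this.trans (Real.log_le_log (by linarith) hu))
    refine Finset.sum_congr rfl fun v _ => ?_
    simp only [Set.indicator, Set.mem_ofPred_eq, Pi.one_apply]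
    split_ifs <;> simp
  have h2 := Finset.sum_le_sum h1
  rw [Finset.sum_comm, Finset.sum_const, nsmul_eq_mul, hBcard] at h2
  simp_rw [← Finset.mul_sum] at h2
  simp_rw [hB, bp_sum_ind] at h2
  have h3 : ∀ v ∈ bpP k ((N : ℝ) ^ d),
      (N : ℝ) ^ d * (Real.log (Ideal.absNorm v.asIdeal) / Ideal.absNorm v.asIdeal) -
      C * ((N : ℝ) ^ d / N) * (Real.log (Ideal.absNorm v.asIdeal) *
        (Ideal.absNorm v.asIdeal : ℝ) ^ (-1 + 1 / (d : ℝ))) ≤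
      Real.log (Ideal.absNorm v.asIdeal) * bpCount b v.asIdeal (c N) N := by
    intro v hv
    rw [bp_mem] at hv
    have := (abs_le.mp (hcount v.asIdeal (c N) N v.ne_bot hN (by rw [one_mul]; exact hv))).1
    have h := mul_le_mul_of_nonneg_left this (bp_log_pos v).le
    refine le_trans (le_of_eq ?_) (le_trans (sub_le_sub_right (le_refl _) _) ?_) (b :=
      Real.log (Ideal.absNorm v.asIdeal) * ((N : ℝ) ^ d / Ideal.absNorm v.asIdeal) -
      Real.log (Ideal.absNorm v.asIdeal) * (C * ((N : ℝ) ^ d / N) *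
        (Ideal.absNorm v.asIdeal : ℝ) ^ (-1 + 1 / (d : ℝ))))
    · ring
    · rw [mul_sub] at h
      linarith
  have h4 := (Finset.sum_le_sum h3).trans h2
  rw [Finset.sum_sub_distrib, ← Finset.mul_sum, ← Finset.mul_sum] at h4
  have h5 := herr ((N : ℝ) ^ d) hNd
  have h6 : ((N : ℝ) ^ d) ^ (1 / (d : ℝ)) = N := by
    rw [one_div]; exact Real.pow_rpow_inv_natCast (by positivity) (by omega)
  rw [h6] at h5
  have h7 : C * ((N : ℝ) ^ d / N) * (∑ v ∈ bpP k ((N : ℝ) ^ d), Real.log (Ideal.absNorm v.asIdeal) *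
      (Ideal.absNorm v.asIdeal : ℝ) ^ (-1 + 1 / (d : ℝ))) ≤ (N : ℝ) ^ d * (C * E) := by
    refine (mul_le_mul_of_nonneg_left h5 (by positivity)).trans (le_of_eq ?_)
    field_simp
  have h8 : (N : ℝ) ^ d * ∑ v ∈ bpP k ((N : ℝ) ^ d),
      Real.log (Ideal.absNorm v.asIdeal) / Ideal.absNorm v.asIdeal ≤
      (N : ℝ) ^ d * (Real.log (C₂ * (N : ℝ) ^ d) + C * E) := by linarith
  have h9 := le_of_mul_le_mul_left h8 (by linarith)
  rw [Real.log_mul (by linarith) (by linarith)] at h9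
  linarith

lemma bp_lower {ι : Type*} [Fintype ι] [Nonempty ι] (b : Module.Basis ι ℤ (𝓞 k)) :
    ∃ C₂ R : ℝ, 1 ≤ C₂ ∧ ∀ N : ℕ, 1 ≤ N →
        Real.log ((N : ℝ) ^ Fintype.card ι) ≤
      ∑ v ∈ bpP k (C₂ * (N : ℝ) ^ Fintype.card ι),
        Real.log (Ideal.absNorm v.asIdeal) / Ideal.absNorm v.asIdeal + R := by
  classical
  obtain ⟨c, C₂, hC₂, hbox⟩ := bp_box b
  obtain ⟨C, hC, hcount⟩ := bp_count b C₂
  have hd : 1 ≤ Fintype.card ι := Fintype.card_pos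
  obtain ⟨E, hE, herr⟩ := bp_err1 k (Fintype.card ι) hd
  obtain ⟨E₂, hE₂, herr₂⟩ := bp_err2 k
  set d := Fintype.card ι with hddef
  set G : ℝ := 1 + C * C₂ with hG
  refine ⟨C₂, C * E * C₂ + G * 2 * E₂, hC₂, fun N hN => ?_⟩
  have hN1 : (1 : ℝ) ≤ N := by exact_mod_cast hN
  have hNd : (1 : ℝ) ≤ (N : ℝ) ^ d := one_le_pow₀ hN1
  set Y : ℝ := C₂ * (N : ℝ) ^ d with hY
  have hY1 : 1 ≤ Y := by rw [hY]; nlinarith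
  have hYd : Y ^ (1 / (d : ℝ)) ≤ C₂ * N := bp_rpow_inv d hd C₂ N hC₂ (by linarith)
  obtain ⟨J, hJ1, -⟩ := bp_exists_pow (2 * Y) (by linarith)
  have hJ0 : 1 ≤ J := by
    rcases Nat.eq_zero_or_pos J with rfl | h
    · rw [pow_zero] at hJ1; linarith
    · exact h
  set B := Fintype.piFinset (fun i => Finset.Ico (c N i) (c N i + (N : ℤ))) with hB
  have hBmem : ∀ a ∈ B, ∀ i, c N i ≤ a i ∧ a i < c N i + N := by
    intro a ha i
    simpa using (Fintype.mem_piFinset.mp ha) i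
  have hBcard : (B.card : ℝ) = (N : ℝ) ^ d := by
    rw [hB, Fintype.card_piFinset]; simp [hddef]
  have hne : ∀ a ∈ B, Ideal.span {∑ i, a i • b i} ≠ ⊥ := by
    intro a ha h
    obtain ⟨hl, hu⟩ := hbox N a hN (hBmem a ha)
    rw [h] at hl
    simp only [Ideal.absNorm_bot, Nat.cast_zero] at hl
    linarith
  have h1 : ∀ a ∈ B, Real.log ((N : ℝ) ^ d) ≤ ∑ v ∈ bpP k Y, ∑ j ∈ Finset.Icc 1 J,
      Real.log (Ideal.absNorm v.asIdeal) *
      Set.indicator {K : Ideal (𝓞 k) | K ∣ Ideal.span {∑ i, a i • b i}} (1 : Ideal (𝓞 k) → ℝ)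
        (v.asIdeal ^ j) := by
    intro a ha
    obtain ⟨hl, hu⟩ := hbox N a hN (hBmem a ha)
    refine (Real.log_le_log (by linarith) hl).trans (bp_log_le _ (hne a ha) Y J hu ?_)
    have : (Ideal.absNorm (Ideal.span {∑ i, a i • b i}) : ℝ) < 2 ^ J := by linarith
    exact_mod_cast this
  have h2 := Finset.sum_le_sum h1
  rw [Finset.sum_comm, Finset.sum_const, nsmul_eq_mul, hBcard] at h2
  have h2' : ∀ v ∈ bpP k Y, ∑ a ∈ B, ∑ j ∈ Finset.Icc 1 J,
      Real.log (Ideal.absNorm v.asIdeal) *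
      Set.indicator {K : Ideal (𝓞 k) | K ∣ Ideal.span {∑ i, a i • b i}} (1 : Ideal (𝓞 k) → ℝ)
        (v.asIdeal ^ j) ≤
      (N : ℝ) ^ d * (Real.log (Ideal.absNorm v.asIdeal) / Ideal.absNorm v.asIdeal) +
      C * ((N : ℝ) ^ d / N) * (Real.log (Ideal.absNorm v.asIdeal) *
        (Ideal.absNorm v.asIdeal : ℝ) ^ (-1 + 1 / (d : ℝ))) +
      G * 2 * (N : ℝ) ^ d * (Real.log (Ideal.absNorm v.asIdeal) *
        ((Ideal.absNorm v.asIdeal : ℝ) ^ 2)⁻¹) := by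
    intro v hv
    rw [bp_mem] at hv
    rw [Finset.sum_comm]
    simp_rw [← Finset.mul_sum]
    simp_rw [hB, bp_sum_ind]
    have hq2 : (2 : ℝ) ≤ Ideal.absNorm v.asIdeal := by exact_mod_cast bp_two_le v
    have hfirst := (abs_le.mp (hcount v.asIdeal (c N) N v.ne_bot hN hv)).2
    have hrest : ∀ j ∈ Finset.Icc 2 J, (bpCount b (v.asIdeal ^ j) (c N) N : ℝ) ≤
        G * (N : ℝ) ^ d * ((Ideal.absNorm v.asIdeal : ℝ) ^ j)⁻¹ := by
      intro j _
      have hqj : ((Ideal.absNorm (v.asIdeal ^ j) : ℕ) : ℝ) = (Ideal.absNorm v.asIdeal : ℝ) ^ j := by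
        rw [map_pow, Nat.cast_pow]
      have hqj0 : (0 : ℝ) < (Ideal.absNorm v.asIdeal : ℝ) ^ j := by positivity
      by_cases hle : ((Ideal.absNorm (v.asIdeal ^ j) : ℕ) : ℝ) ≤ Y
      · have := (abs_le.mp (hcount (v.asIdeal ^ j) (c N) N (pow_ne_zero _ v.ne_bot) hN hle)).2
        rw [hqj] at this hle
        rw [Real.rpow_add hqj0, Real.rpow_neg_one] at this
        have hr : ((Ideal.absNorm v.asIdeal : ℝ) ^ j) ^ (1 / (d : ℝ)) ≤ C₂ * N :=
          (Real.rpow_le_rpow hqj0.le hle (by positivity)).trans hYd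
        have h3 : C * ((N : ℝ) ^ d / N) * (((Ideal.absNorm v.asIdeal : ℝ) ^ j)⁻¹ *
            ((Ideal.absNorm v.asIdeal : ℝ) ^ j) ^ (1 / (d : ℝ))) ≤
            C * ((N : ℝ) ^ d / N) * (((Ideal.absNorm v.asIdeal : ℝ) ^ j)⁻¹ * (C₂ * N)) := by
          refine mul_le_mul_of_nonneg_left ?_ (by positivity)
          exact mul_le_mul_of_nonneg_left hr (by positivity)
        have h4 : C * ((N : ℝ) ^ d / N) * (((Ideal.absNorm v.asIdeal : ℝ) ^ j)⁻¹ * (C₂ * N)) =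
            C * C₂ * (N : ℝ) ^ d * ((Ideal.absNorm v.asIdeal : ℝ) ^ j)⁻¹ := by
          field_simp
        rw [h4] at h3
        rw [div_eq_mul_inv] at this
        rw [hG]
        linarith
      · have h0 : bpCount b (v.asIdeal ^ j) (c N) N = 0 := by
          rw [bpCount, Finset.card_eq_zero, Finset.filter_eq_empty_iff]
          intro a ha hmem
          have ha' : a ∈ B := by rw [hB]; convert! ha
          obtain ⟨hl, hu⟩ := hbox N a hN (hBmem a ha')
          apply hle
          refine le_trans ?_ hu
          have hdv : v.asIdeal ^ j ∣ Ideal.span {∑ i, a i • b i} := Ideal.dvd_span_singleton.mpr hmem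
          have hpos : 0 < Ideal.absNorm (Ideal.span {∑ i, a i • b i}) := by
            rw [Nat.pos_iff_ne_zero, Ne, Ideal.absNorm_eq_zero_iff]; exact hne a ha'
          exact_mod_cast Nat.le_of_dvd hpos (map_dvd Ideal.absNorm hdv)
        rw [h0, Nat.cast_zero]
        have : 0 ≤ G := by rw [hG]; positivity
        positivity
    rw [← Finset.add_sum_Ioc_eq_sum_Icc hJ0, pow_one]
    have hIoc : Finset.Ioc 1 J = Finset.Icc 2 J := by ext; simp; omega
    rw [hIoc]
    have hsum : ∑ j ∈ Finset.Icc 2 J, Real.log (Ideal.absNorm v.asIdeal) *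
        (bpCount b (v.asIdeal ^ j) (c N) N : ℝ) ≤
        G * 2 * (N : ℝ) ^ d * (Real.log (Ideal.absNorm v.asIdeal) *
        ((Ideal.absNorm v.asIdeal : ℝ) ^ 2)⁻¹) := by
      rw [← Finset.mul_sum]
      have hG0 : 0 ≤ G := by rw [hG]; positivity
      calc _ ≤ Real.log (Ideal.absNorm v.asIdeal) *
            (G * (N : ℝ) ^ d * (2 * ((Ideal.absNorm v.asIdeal : ℝ) ^ 2)⁻¹)) := by
            refine mul_le_mul_of_nonneg_left ?_ (bp_log_pos v).le
            refine (Finset.sum_le_sum hrest).trans ?_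
            rw [← Finset.mul_sum]
            exact mul_le_mul_of_nonneg_left (bp_geom _ hq2 J) (by positivity)
        _ = _ := by ring
    have hf := mul_le_mul_of_nonneg_left hfirst (bp_log_pos v).le
    rw [mul_sub, sub_le_iff_le_add] at hf
    rw [mul_add, Finset.mul_sum]
    refine (add_le_add hf hsum).trans (le_of_eq ?_)
    ring
  have h4 := h2.trans (Finset.sum_le_sum h2')
  rw [Finset.sum_add_distrib, Finset.sum_add_distrib, ← Finset.mul_sum, ← Finset.mul_sum,
    ← Finset.mul_sum] at h4
  have h5 := herr Y hY1
  have h5' := herr₂ Y hY1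
  have h7 : C * ((N : ℝ) ^ d / N) * (∑ v ∈ bpP k Y, Real.log (Ideal.absNorm v.asIdeal) *
      (Ideal.absNorm v.asIdeal : ℝ) ^ (-1 + 1 / (d : ℝ))) ≤ (N : ℝ) ^ d * (C * E * C₂) := by
    have : E * Y ^ (1 / (d : ℝ)) ≤ E * (C₂ * N) := mul_le_mul_of_nonneg_left hYd hE.le
    refine (mul_le_mul_of_nonneg_left (h5.trans this) (by positivity)).trans (le_of_eq ?_)
    field_simp
  have h7' : G * 2 * (N : ℝ) ^ d * (∑ v ∈ bpP k Y, Real.log (Ideal.absNorm v.asIdeal) *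
      ((Ideal.absNorm v.asIdeal : ℝ) ^ 2)⁻¹) ≤ (N : ℝ) ^ d * (G * 2 * E₂) := by
    have hG0 : 0 ≤ G := by rw [hG]; positivity
    refine (mul_le_mul_of_nonneg_left h5' (by positivity)).trans (le_of_eq ?_)
    ring
  have h8 : (N : ℝ) ^ d * Real.log ((N : ℝ) ^ d) ≤ (N : ℝ) ^ d * (∑ v ∈ bpP k Y,
      Real.log (Ideal.absNorm v.asIdeal) / Ideal.absNorm v.asIdeal +
      (C * E * C₂ + G * 2 * E₂)) := by linarith
  exact le_of_mul_le_mul_left h8 (by linarith)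

variable (k) in
lemma bp_mertens : ∃ R : ℝ, 1 ≤ R ∧ ∀ t : ℝ, 1 ≤ t →
    |∑ v ∈ bpP k t, Real.log (Ideal.absNorm v.asIdeal) / Ideal.absNorm v.asIdeal - Real.log t|
      ≤ R := by
  classical
  let b := RingOfIntegers.basis k
  have hne : Nonempty (Module.Free.ChooseBasisIndex ℤ (𝓞 k)) := b.index_nonempty
  obtain ⟨R₁, h1⟩ := bp_upper b
  obtain ⟨C₂, R₂, hC₂, h2⟩ := bp_lower b
  have hd : 1 ≤ Fintype.card (Module.Free.ChooseBasisIndex ℤ (𝓞 k)) := Fintype.card_pos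
  set d := Fintype.card (Module.Free.ChooseBasisIndex ℤ (𝓞 k)) with hddef
  have hM0 : ∀ v : HeightOneSpectrum (𝓞 k),
      0 ≤ Real.log (Ideal.absNorm v.asIdeal) / Ideal.absNorm v.asIdeal := fun v =>
    div_nonneg (bp_log_pos v).le (by positivity)
  have hmono : ∀ s t : ℝ, s ≤ t →
      ∑ v ∈ bpP k s, Real.log (Ideal.absNorm v.asIdeal) / Ideal.absNorm v.asIdeal ≤
      ∑ v ∈ bpP k t, Real.log (Ideal.absNorm v.asIdeal) / Ideal.absNorm v.asIdeal := fun s t h =>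
    Finset.sum_le_sum_of_subset_of_nonneg (bp_mono h) (fun v _ _ => hM0 v)
  have hlog2 : 0 < Real.log (2 ^ d) := Real.log_pos (one_lt_pow₀ (by norm_num) (by omega))
  have hlogC : 0 ≤ Real.log C₂ := Real.log_nonneg hC₂
  refine ⟨1 + Real.log (2 ^ d) + |R₁| + |R₂| + Real.log C₂, by linarith [abs_nonneg R₁, abs_nonneg R₂], ?_⟩
  intro t ht
  have hx1 : ∀ s : ℝ, 1 ≤ s → (1 : ℝ) ≤ s ^ (1 / (d : ℝ)) := fun s hs =>
    Real.one_le_rpow hs (by positivity)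
  have hxd : ∀ s : ℝ, 1 ≤ s → (s ^ (1 / (d : ℝ))) ^ d = s := fun s hs => by
    rw [one_div]; exact Real.rpow_inv_natCast_pow (by linarith) (by omega)
  rw [abs_le]
  constructor
  · by_cases htC : t ≤ C₂
    · have h3 : 0 ≤ ∑ v ∈ bpP k t, Real.log (Ideal.absNorm v.asIdeal) / Ideal.absNorm v.asIdeal :=
        Finset.sum_nonneg fun v _ => hM0 v
      have h4 : Real.log t ≤ Real.log C₂ := Real.log_le_log (by linarith) htC
      linarith [abs_nonneg R₁, abs_nonneg R₂]
    · push Not at htC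
      set s := t / C₂ with hs
      have hs1 : 1 ≤ s := by rw [hs, le_div_iff₀ (by linarith)]; linarith
      set N := ⌊s ^ (1 / (d : ℝ))⌋₊ with hN
      have hN1 : 1 ≤ N := Nat.le_floor (by simpa using hx1 s hs1)
      have hN1' : (1 : ℝ) ≤ N := by exact_mod_cast hN1
      have h3 := h2 N hN1
      have hNs : (N : ℝ) ^ d ≤ s := by
        rw [← hxd s hs1]
        exact pow_le_pow_left₀ (by positivity) (Nat.floor_le (by linarith [hx1 s hs1])) _
      have hsN : s ≤ 2 ^ d * (N : ℝ) ^ d := by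
        rw [← mul_pow]
        conv_lhs => rw [← hxd s hs1]
        refine pow_le_pow_left₀ (by linarith [hx1 s hs1]) ?_ _
        have := Nat.lt_floor_add_one (s ^ (1 / (d : ℝ)))
        linarith
      have h4 := hmono (C₂ * (N : ℝ) ^ d) t (by
        have := mul_le_mul_of_nonneg_left hNs (by linarith : 0 ≤ C₂)
        rwa [hs, mul_div_cancel₀ _ (by linarith)] at this)
      have h5 : Real.log s ≤ Real.log (2 ^ d) + Real.log ((N : ℝ) ^ d) := by
        rw [← Real.log_mul (by positivity) (by positivity)]
        exact Real.log_le_log (by linarith) hsN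
      have h6 : Real.log s = Real.log t - Real.log C₂ := Real.log_div (by linarith) (by linarith)
      linarith [abs_nonneg R₁, le_abs_self R₂]
  · set N := ⌈t ^ (1 / (d : ℝ))⌉₊ with hN
    have hle := Nat.le_ceil (t ^ (1 / (d : ℝ)))
    have hN1' : (1 : ℝ) ≤ N := (hx1 t ht).trans hle
    have hN1 : 1 ≤ N := by exact_mod_cast hN1'
    have h3 := h1 N hN1
    have h4 := hmono t ((N : ℝ) ^ d) (by
      conv_lhs => rw [← hxd t ht]
      exact pow_le_pow_left₀ (by linarith [hx1 t ht]) hle _)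
    have hNt : (N : ℝ) ^ d ≤ 2 ^ d * t := by
      conv_rhs => rw [← hxd t ht]
      rw [← mul_pow]
      refine pow_le_pow_left₀ (by positivity) ?_ _
      have := Nat.ceil_lt_add_one (by linarith [hx1 t ht] : 0 ≤ t ^ (1 / (d : ℝ)))
      linarith [hx1 t ht]
    have h5 : Real.log ((N : ℝ) ^ d) ≤ Real.log (2 ^ d) + Real.log t := by
      rw [← Real.log_mul (by positivity) (by linarith)]
      exact Real.log_le_log (by positivity) hNt
    linarith [le_abs_self R₁, abs_nonneg R₂]
end

section
variable {k : Type*} [Field k] [NumberField k]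

lemma bp_window (R : ℝ) (hR : ∀ t : ℝ, 1 ≤ t →
    |∑ v ∈ bpP k t, Real.log (Ideal.absNorm v.asIdeal) / Ideal.absNorm v.asIdeal - Real.log t|
      ≤ R) (s t T δ : ℝ) (hs : 1 ≤ s) (hst : s ≤ t) (htT : t ≤ T) (hT : 1 < T) (hδ : 0 ≤ δ) :
    ∑ v ∈ bpP k s, (Ideal.absNorm v.asIdeal : ℝ) ^ (-1 + δ) +
      (Real.log t - Real.log s - 2 * R) * (s ^ δ / Real.log T) ≤
      ∑ v ∈ bpP k t, (Ideal.absNorm v.asIdeal : ℝ) ^ (-1 + δ) := by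
  classical
  have hlT : 0 < Real.log T := Real.log_pos hT
  have hsub : bpP k s ⊆ bpP k t := bp_mono hst
  rw [← Finset.sum_sdiff hsub (f := fun v => (Ideal.absNorm v.asIdeal : ℝ) ^ (-1 + δ)), add_comm]
  refine add_le_add_left ?_ _
  have h1 := abs_le.mp (hR t (hs.trans hst))
  have h2 := abs_le.mp (hR s hs)
  have h3 := Finset.sum_sdiff hsub
    (f := fun v => Real.log (Ideal.absNorm v.asIdeal) / (Ideal.absNorm v.asIdeal : ℝ))
  have h4 : Real.log t - Real.log s - 2 * R ≤ ∑ v ∈ bpP k t \ bpP k s,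
      Real.log (Ideal.absNorm v.asIdeal) / (Ideal.absNorm v.asIdeal : ℝ) := by
    linarith [h1.1, h2.2]
  refine (mul_le_mul_of_nonneg_right h4 (by positivity)).trans ?_
  rw [Finset.sum_mul]
  refine Finset.sum_le_sum fun v hv => ?_
  rw [Finset.mem_sdiff, bp_mem, bp_mem, not_le] at hv
  have hq2 : (2 : ℝ) ≤ Ideal.absNorm v.asIdeal := by exact_mod_cast bp_two_le v
  have hl := bp_log_pos v
  have hlT' : Real.log (Ideal.absNorm v.asIdeal) ≤ Real.log T :=
    Real.log_le_log (by linarith) (hv.1.trans htT)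
  rw [Real.rpow_add (by linarith), Real.rpow_neg_one]
  have h5 : s ^ δ ≤ (Ideal.absNorm v.asIdeal : ℝ) ^ δ :=
    Real.rpow_le_rpow (by linarith) hv.2.le hδ
  have h6 : Real.log (Ideal.absNorm v.asIdeal) * (s ^ δ / Real.log T) ≤
      (Ideal.absNorm v.asIdeal : ℝ) ^ δ := by
    rw [mul_div_assoc', div_le_iff₀ hlT, mul_comm]
    exact mul_le_mul h5 hlT' hl.le (by positivity)
  calc _ = (Ideal.absNorm v.asIdeal : ℝ)⁻¹ *
        (Real.log (Ideal.absNorm v.asIdeal) * (s ^ δ / Real.log T)) := by ring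
    _ ≤ _ := mul_le_mul_of_nonneg_left h6 (by positivity)

lemma bp_S_mono (s t δ : ℝ) (h : s ≤ t) :
    ∑ v ∈ bpP k s, (Ideal.absNorm v.asIdeal : ℝ) ^ (-1 + δ) ≤
    ∑ v ∈ bpP k t, (Ideal.absNorm v.asIdeal : ℝ) ^ (-1 + δ) :=
  Finset.sum_le_sum_of_subset_of_nonneg (bp_mono h)
    (fun v _ _ => Real.rpow_nonneg (by positivity) _)

lemma bp_S_nonneg (t δ : ℝ) :
    0 ≤ ∑ v ∈ bpP k t, (Ideal.absNorm v.asIdeal : ℝ) ^ (-1 + δ) :=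
  Finset.sum_nonneg (fun v _ => Real.rpow_nonneg (by positivity) _)

lemma bp_diverge (R : ℝ) (hR1 : 1 ≤ R) (hR : ∀ t : ℝ, 1 ≤ t →
    |∑ v ∈ bpP k t, Real.log (Ideal.absNorm v.asIdeal) / Ideal.absNorm v.asIdeal - Real.log t|
      ≤ R) (X : ℝ) :
    ∃ T : ℝ, 1 < T ∧ X ≤ ∑ v ∈ bpP k T, (Ideal.absNorm v.asIdeal : ℝ) ^ (-1 + (0 : ℝ)) := by
  have hR0 : 0 < R := by linarith
  have hwin := fun (s t : ℝ) (hs : 1 ≤ s) (hst : s ≤ t) (ht : 1 < t) =>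
    bp_window R hR s t t 0 hs hst le_rfl ht le_rfl
  have hnn := fun t : ℝ => bp_S_nonneg (k := k) t 0
  obtain ⟨S, hS⟩ : ∃ S : ℝ → ℝ, ∀ t, S t =
      ∑ v ∈ bpP k t, (Ideal.absNorm v.asIdeal : ℝ) ^ (-1 + (0 : ℝ)) := ⟨_, fun _ => rfl⟩
  simp only [← hS] at hwin hnn ⊢
  clear hS hR
  have key : ∀ m : ℕ, (m : ℝ) / 4 ≤ S (Real.exp (4 * R * 2 ^ m)) := by
    intro m
    induction m with
    | zero =>
      rw [Nat.cast_zero, zero_div]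
      exact hnn _
    | succ m ih =>
      have hp : (1 : ℝ) ≤ 2 ^ m := one_le_pow₀ (by norm_num)
      have hRp : R ≤ R * 2 ^ m := le_mul_of_one_le_right (by linarith) hp
      have hstep : 4 * R * 2 ^ m ≤ 4 * R * 2 ^ (m + 1) := by rw [pow_succ]; linarith
      have h := hwin (Real.exp (4 * R * 2 ^ m)) (Real.exp (4 * R * 2 ^ (m + 1)))
        (Real.one_le_exp (by positivity))
        (Real.exp_le_exp.mpr hstep) (Real.one_lt_exp_iff.mpr (by positivity))
      rw [Real.log_exp, Real.log_exp, Real.rpow_zero] at h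
      have h2 : 1 / 4 ≤ (4 * R * 2 ^ (m + 1) - 4 * R * 2 ^ m - 2 * R) *
          (1 / (4 * R * 2 ^ (m + 1))) := by
        rw [mul_one_div, div_le_div_iff₀ (by norm_num) (by positivity), pow_succ]
        linarith
      rw [Nat.cast_succ]
      linarith
  obtain ⟨m, hm⟩ := exists_nat_ge (4 * X)
  exact ⟨Real.exp (4 * R * 2 ^ m), Real.one_lt_exp_iff.mpr (by positivity), by linarith [key m]⟩

lemma bp_x0 : ∃ x₀ : ℝ, ∀ x : ℝ, x₀ ≤ x →
    2 ≤ Real.log (2 * x * Real.log x) ∧ Real.log (2 * x * Real.log x) ≤ 6 / 5 * Real.log x := by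
  have h1 : ∀ᶠ u : ℝ in Filter.atTop, 2 ≤ u := Filter.eventually_ge_atTop 2
  have h := (Real.isLittleO_log_id_atTop.bound (by norm_num : (0 : ℝ) < 1 / 10))
  have h3 : ∀ᶠ u : ℝ in Filter.atTop, Real.log (2 * u) ≤ 1 / 5 * u := by
    have ht : Filter.Tendsto (fun u : ℝ => 2 * u) Filter.atTop Filter.atTop :=
      Filter.tendsto_id.const_mul_atTop (by norm_num)
    filter_upwards [ht.eventually h, h1] with u hu hu2
    simp only [id, Real.norm_eq_abs] at hu
    rw [abs_of_nonneg (by linarith : (0 : ℝ) ≤ 2 * u)] at hu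
    linarith [le_abs_self (Real.log (2 * u))]
  have h4 := Real.tendsto_log_atTop.eventually (h1.and h3)
  obtain ⟨x₀, hx₀⟩ := Filter.eventually_atTop.mp (h4.and (Filter.eventually_ge_atTop (1 : ℝ)))
  refine ⟨x₀, fun x hx => ?_⟩
  obtain ⟨⟨h5, h6⟩, h7⟩ := hx₀ x hx
  have e : Real.log (2 * x * Real.log x) = Real.log x + Real.log (2 * Real.log x) := by
    rw [← Real.log_mul (by linarith) (by linarith)]
    congr 1; ring
  have h8 : 0 ≤ Real.log (2 * Real.log x) := Real.log_nonneg (by linarith)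
  rw [e]
  constructor <;> linarith

lemma bp_exp_sum : (13 / 10 : ℝ) ≤ Real.exp (-(1 / 2)) + Real.exp (-1) + Real.exp (-(3 / 2)) +
    Real.exp (-2) := by
  set z := Real.exp (-(1 / 2)) with hz
  have hz0 : 0 < z := Real.exp_pos _
  have e2 : Real.exp (-1) = z ^ 2 := by rw [hz, ← Real.exp_nat_mul]; norm_num
  have e3 : Real.exp (-(3 / 2)) = z ^ 3 := by rw [hz, ← Real.exp_nat_mul]; norm_num
  have e4 : Real.exp (-2) = z ^ 4 := by rw [hz, ← Real.exp_nat_mul]; norm_num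
  have h1 : (0.36787944116 : ℝ) < Real.exp (-1) := Real.exp_neg_one_gt_d9
  rw [e2] at h1
  have h2 : (0.6 : ℝ) ≤ z := by
    by_contra! h
    nlinarith
  have h3 : (0.6 : ℝ) ^ 3 ≤ z ^ 3 := pow_le_pow_left₀ (by norm_num) h2 3
  have h4 : (0.6 : ℝ) ^ 4 ≤ z ^ 4 := pow_le_pow_left₀ (by norm_num) h2 4
  rw [e2, e3, e4]
  norm_num at *
  linarith

lemma bp_case_large (R : ℝ) (hR1 : 1 ≤ R) (hR : ∀ t : ℝ, 1 ≤ t →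
    |∑ v ∈ bpP k t, Real.log (Ideal.absNorm v.asIdeal) / Ideal.absNorm v.asIdeal - Real.log t|
      ≤ R) (δ L : ℝ) (hδ : 0 < δ) (hδ2 : δ ≤ 1 / (200 * R)) (hL : 2 ≤ L) :
    49 / 100 * (13 / 10) * (Real.exp L / L) ≤
      ∑ v ∈ bpP k (Real.exp (L / δ)), (Ideal.absNorm v.asIdeal : ℝ) ^ (-1 + δ) := by
  have hw : ∀ i : ℝ, 0 ≤ i → i ≤ 3 / 2 →
      ∑ v ∈ bpP k (Real.exp ((L - (i + 1 / 2)) / δ)), (Ideal.absNorm v.asIdeal : ℝ) ^ (-1 + δ) +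
        49 / 100 * (Real.exp L / L) * Real.exp (-(i + 1 / 2)) ≤
      ∑ v ∈ bpP k (Real.exp ((L - i) / δ)), (Ideal.absNorm v.asIdeal : ℝ) ^ (-1 + δ) := by
    intro i hi hi2
    have h := bp_window R hR (Real.exp ((L - (i + 1 / 2)) / δ)) (Real.exp ((L - i) / δ))
      (Real.exp (L / δ)) δ (Real.one_le_exp (div_nonneg (by linarith) hδ.le))
      (Real.exp_le_exp.mpr (div_le_div_of_nonneg_right (by linarith) hδ.le))
      (Real.exp_le_exp.mpr (div_le_div_of_nonneg_right (by linarith) hδ.le))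
      (Real.one_lt_exp_iff.mpr (by positivity)) hδ.le
    refine le_trans (add_le_add_right ?_ _) h
    rw [Real.log_exp, Real.log_exp, Real.log_exp, ← Real.exp_mul, div_mul_cancel₀ _ hδ.ne']
    have e : ((L - i) / δ - (L - (i + 1 / 2)) / δ - 2 * R) * (Real.exp (L - (i + 1 / 2)) / (L / δ)) =
        (1 / 2 - 2 * R * δ) * (Real.exp L / L * Real.exp (-(i + 1 / 2))) := by
      rw [sub_eq_add_neg L (i + 1 / 2), Real.exp_add]
      field_simp
      ring
    rw [e, mul_assoc]
    refine mul_le_mul_of_nonneg_right ?_ (by positivity)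
    rw [le_div_iff₀ (by positivity)] at hδ2
    linarith
  have h0 := hw 0 le_rfl (by norm_num)
  have h1 := hw (1 / 2) (by norm_num) (by norm_num)
  have h2 := hw 1 (by norm_num) (by norm_num)
  have h3 := hw (3 / 2) (by norm_num) (by norm_num)
  norm_num at h0 h1 h2 h3
  have h4 := bp_S_nonneg (k := k) (Real.exp ((L - 2) / δ)) δ
  have h5 := bp_exp_sum
  norm_num at h5
  have h6 := mul_le_mul_of_nonneg_left h5 (by positivity : 0 ≤ 49 / 100 * (Real.exp L / L))
  linarith

lemma bp_case_delta (R : ℝ) (hR1 : 1 ≤ R) (hR : ∀ t : ℝ, 1 ≤ t →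
    |∑ v ∈ bpP k t, Real.log (Ideal.absNorm v.asIdeal) / Ideal.absNorm v.asIdeal - Real.log t|
      ≤ R) (δ₀ : ℝ) (hδ₀ : 0 < δ₀) :
    ∃ a : ℝ, 0 ≤ a ∧ ∀ δ L ℓ : ℝ, δ₀ ≤ δ → δ ≤ 1 → 0 ≤ L → L ≤ ℓ → 1 ≤ ℓ →
      Real.exp L / ℓ ≤
      ∑ v ∈ bpP k (Real.exp (a + L / δ)), (Ideal.absNorm v.asIdeal : ℝ) ^ (-1 + δ) := by
  set h := 2 * R + 1 with hh
  set z := 2 / δ₀ + 2 * h + 2 with hz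
  have hz0 : 0 < z := by positivity
  set a := h + z / δ₀ with ha
  have haz : (a - h) * δ₀ = z := by rw [ha]; field_simp; ring
  have hexp : a + 1 / δ₀ ≤ Real.exp z := by
    have h1 := Real.quadratic_le_exp_of_nonneg hz0.le
    have h2 : z ^ 2 / 2 = z / δ₀ + z * (h + 1) := by
      have : z ^ 2 / 2 = z * (z / 2) := by ring
      rw [this]
      conv_lhs => rw [hz]
      rw [← hz]
      ring
    have h3 : 0 ≤ 1 / δ₀ := by positivity
    have h4 : z = 2 * (1 / δ₀) + 2 * h + 2 := by rw [hz]; ring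
    have h5 : h ≤ z * h := le_mul_of_one_le_left (by linarith) (by linarith)
    rw [ha]
    linarith
  have ha0 : 0 < a := by positivity
  refine ⟨a, ha0.le, ?_⟩
  intro δ L ℓ hδ hδ1 hL hLℓ hℓ
  have hδ0 : 0 < δ := by linarith
  have hLδ : 0 ≤ L / δ := by positivity
  have hah : h ≤ a := by rw [ha]; linarith [show 0 < z / δ₀ by positivity]
  have hw := bp_window R hR (Real.exp (a + L / δ - h)) (Real.exp (a + L / δ))
      (Real.exp (a + L / δ)) δ (Real.one_le_exp (by linarith))
      (Real.exp_le_exp.mpr (by linarith)) le_rfl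
      (Real.one_lt_exp_iff.mpr (by linarith)) hδ0.le
  have h4 := bp_S_nonneg (k := k) (Real.exp (a + L / δ - h)) δ
  rw [Real.log_exp, Real.log_exp, ← Real.exp_mul] at hw
  have e1 : a + L / δ - (a + L / δ - h) - 2 * R = 1 := by rw [hh]; ring
  rw [e1, one_mul] at hw
  refine le_trans ?_ (le_trans (le_add_of_nonneg_left h4) hw)
  have e2 : (a + L / δ - h) * δ = L + (a - h) * δ := by field_simp; ring
  rw [e2, Real.exp_add, div_le_div_iff₀ (by linarith) (by linarith), mul_assoc]
  refine mul_le_mul_of_nonneg_left ?_ (Real.exp_pos _).le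
  have h5 : Real.exp z ≤ Real.exp ((a - h) * δ) := by
    rw [← haz]
    exact Real.exp_le_exp.mpr (mul_le_mul_of_nonneg_left hδ (by linarith))
  have h6 : L / δ ≤ ℓ * (1 / δ₀) := by
    rw [mul_one_div]
    exact div_le_div₀ (by linarith) hLℓ hδ₀ hδ
  have h7 : a ≤ ℓ * a := le_mul_of_one_le_left ha0.le hℓ
  calc a + L / δ ≤ (a + 1 / δ₀) * ℓ := by linarith
    _ ≤ _ := mul_le_mul_of_nonneg_right (hexp.trans h5) (by linarith)

end

lemma bp_finsum {k : Type*} [Field k] [NumberField k] (t δ : ℝ) :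
    (∑ᶠ v : HeightOneSpectrum (𝓞 k),
      if (Nat.card (𝓞 k ⧸ v.asIdeal) : ℝ) ≤ t
        then (Nat.card (𝓞 k ⧸ v.asIdeal) : ℝ) ^ (-1 + δ) else 0) =
    ∑ v ∈ bpP k t, (Ideal.absNorm v.asIdeal : ℝ) ^ (-1 + δ) := by
  have hN : ∀ v : HeightOneSpectrum (𝓞 k),
      Nat.card (𝓞 k ⧸ v.asIdeal) = Ideal.absNorm v.asIdeal := fun v => rfl
  simp_rw [hN]
  rw [finsum_eq_sum_of_support_subset (s := bpP k t)]
  · refine Finset.sum_congr rfl fun v hv => ?_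
    rw [if_pos (bp_mem.mp hv)]
  · intro v hv
    rw [Function.mem_support] at hv
    rw [Finset.mem_coe, bp_mem]
    by_contra h
    exact hv (if_neg h)

/-- For a fixed number field `k`, one has `β_k(x; δ) ≪ (2x log x)^{1/δ}` for
`0 < δ < 1` and `x ≥ 2`, the implied constant depending only on `k`. -/
theorem betaPIT_le (k : Type*) [Field k] [NumberField k] :
    ∃ C : ℝ, 0 < C ∧ ∀ x δ : ℝ, 2 ≤ x → 0 < δ → δ < 1 →
      betaPIT k x δ ≤ C * (2 * x * Real.log x) ^ (1 / δ) := by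
  obtain ⟨R, hR1, hR⟩ := bp_mertens k
  obtain ⟨x₀, hx₀⟩ := bp_x0
  obtain ⟨T, hT1, hT⟩ := bp_diverge R hR1 hR x₀
  have hlT : 0 < Real.log T := Real.log_pos hT1
  have hl2 : 0.6931471803 < Real.log 2 := Real.log_two_gt_d9
  set δ₀ : ℝ := min (1 / (200 * R)) (Real.log 2 / Real.log T) with hδ₀
  have hδ₀0 : 0 < δ₀ := lt_min (by positivity) (by positivity)
  obtain ⟨a, ha0, ha⟩ := bp_case_delta R hR1 hR δ₀ hδ₀0
  refine ⟨Real.exp a, Real.exp_pos a, ?_⟩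
  intro x δ hx hδ hδ1
  have hlx : Real.log 2 ≤ Real.log x := Real.log_le_log (by norm_num) hx
  set y := 2 * x * Real.log x with hy
  have hy2 : 2 ≤ y := by rw [hy]; nlinarith
  set L := Real.log y with hL
  have hL2 : Real.log 2 ≤ L := Real.log_le_log (by norm_num) hy2
  have hexpL : Real.exp L = y := Real.exp_log (by linarith)
  have hyδ : y ^ (1 / δ) = Real.exp (L / δ) := by
    rw [Real.rpow_def_of_pos (by linarith), mul_one_div]
  have hLδ : L ≤ L / δ := by rw [le_div_iff₀ hδ]; nlinarith
  rw [hyδ, ← Real.exp_add]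
  refine csInf_le ⟨2, fun t ht => ht.1⟩ ⟨?_, ?_⟩
  · calc (2 : ℝ) ≤ Real.exp L := by rw [hexpL]; exact hy2
      _ ≤ _ := Real.exp_le_exp.mpr (by linarith)
  rw [bp_finsum]
  by_cases hc : δ₀ ≤ δ
  · have hLx : L ≤ 2 * Real.log x := by
      have h1 : Real.log x ≤ x / 2 := by
        have := Real.log_le_sub_one_of_pos (show 0 < x / 2 by linarith)
        have h3 : Real.log (x / 2) = Real.log x - Real.log 2 :=
          Real.log_div (by linarith) (by norm_num)
        have : Real.log 2 < 0.6931471808 := Real.log_two_lt_d9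
        linarith
      have h2 : y ≤ x * x := by rw [hy]; nlinarith
      have h3 : L ≤ Real.log (x * x) := Real.log_le_log (by linarith) h2
      rw [Real.log_mul (by linarith) (by linarith)] at h3
      linarith
    have := ha δ L (2 * Real.log x) hc hδ1.le (by linarith) hLx (by linarith)
    refine le_trans (le_of_eq ?_) this
    rw [hexpL, hy]
    have : Real.log x ≠ 0 := by linarith
    field_simp
  · push Not at hc
    refine le_trans ?_ (bp_S_mono (Real.exp (L / δ)) _ δ (Real.exp_le_exp.mpr (by linarith)))
    by_cases hxx : x₀ ≤ x
    · obtain ⟨h1, h2⟩ := hx₀ x hxx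
      refine le_trans ?_ (bp_case_large R hR1 hR δ L hδ (hc.le.trans (min_le_left _ _)) h1)
      rw [hexpL, mul_div_assoc', le_div_iff₀ (by linarith)]
      have h3 : x * L ≤ x * (6 / 5 * Real.log x) := mul_le_mul_of_nonneg_left h2 (by linarith)
      refine h3.trans ?_
      rw [hy]
      have : 0 ≤ x * Real.log x := mul_nonneg (by linarith) (by linarith)
      linarith
    · push Not at hxx
      have hTle : T ≤ Real.exp (L / δ) := by
        rw [← Real.log_le_iff_le_exp (by linarith), le_div_iff₀ hδ]
        have h1 : δ ≤ Real.log 2 / Real.log T := hc.le.trans (min_le_right _ _)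
        rw [le_div_iff₀ hlT] at h1
        linarith
      refine hxx.le.trans (hT.trans (le_trans (Finset.sum_le_sum fun v _ => ?_)
        (bp_S_mono T _ δ hTle)))
      have hq2 : (2 : ℝ) ≤ Ideal.absNorm v.asIdeal := by exact_mod_cast bp_two_le v
      exact Real.rpow_le_rpow_of_exponent_le (by linarith) (by linarith)

end
end
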